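/- arXiv:2005.01374 — 14 statements merged into one kernel-verified Lean document; each statement's English description precedes it below -/
import Mathlib

section
/- A deterministic visibly push-down automaton M has a synchronizing word in the empty stack model if and only if for every pair of states p, q ∈ Q there exist a word w ∈ Σ* and a state r ∈ Q such that (p, ⊥) →^w (r, ⊥) and (q, ⊥) →^w (r, ⊥). -/
/-- Letters of a visibly pushdown alphabet: call letters (pushing one stack symbol),
internal letters (leaving the stack unchanged), and return letters (popping). -/
inductive VLetter (C I R : Type) : Type
  | call : C → VLetter C I R
  | int  : I → VLetter C I R
  | ret  : R → VLetter C I R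

/-- A deterministic visibly push-down automaton over state type `Q`, call letters `C`,
internal letters `I`, return letters `R`, and stack alphabet `Γ` (the symbols other than the
bottom symbol `⊥`).  A stack is a `List Γ` of the symbols above `⊥`, top at the head; the
bottom symbol `⊥` is implicit.  A return transition receives `none` when `⊥` is the topmost
symbol (it is read but not popped), and `some γ` when `γ ∈ Γ` is on top (which is popped). -/
structure DVPDA (Q C I R Γ : Type) : Type where
  δc : Q → C → Q × Γ
  δi : Q → I → Q
  δr : Q → R → Option Γ → Q

namespace DVPDA

variable {Q C I R Γ : Type}

/-- One step of a DVPDA on a configuration `(q, υ)`. -/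
def step (M : DVPDA Q C I R Γ) : Q × List Γ → VLetter C I R → Q × List Γ
  | (q, s), .call c => ((M.δc q c).1, (M.δc q c).2 :: s)
  | (q, s), .int i  => (M.δi q i, s)
  | (q, []), .ret ρ => (M.δr q ρ none, [])
  | (q, γ :: s), .ret ρ => (M.δr q ρ (some γ), s)

/-- The run of a DVPDA on a word: `(q, υ) →^w M.run (q, υ) w`. -/
def run (M : DVPDA Q C I R Γ) (cfg : Q × List Γ) (w : List (VLetter C I R)) : Q × List Γ :=
  w.foldl M.step cfg

/-- `w` synchronizes `M` in the empty stack model: all runs from `(q, ⊥)` end in the same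
state with empty stack. -/
def SyncEmpty (M : DVPDA Q C I R Γ) (w : List (VLetter C I R)) : Prop :=
  ∃ qbar : Q, ∀ q : Q, M.run (q, []) w = (qbar, [])

/-- `w` synchronizes `M` in the same stack model: all runs from `(q, ⊥)` end in the same
state with the same stack content. -/
def SyncSame (M : DVPDA Q C I R Γ) (w : List (VLetter C I R)) : Prop :=
  ∃ (qbar : Q) (υ : List Γ), ∀ q : Q, M.run (q, []) w = (qbar, υ)

/-- `w` synchronizes `M` in the arbitrary stack model: all runs from `(q, ⊥)` end in the same
state, with arbitrary stack contents. -/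
def SyncArb (M : DVPDA Q C I R Γ) (w : List (VLetter C I R)) : Prop :=
  ∃ qbar : Q, ∀ q : Q, (M.run (q, []) w).1 = qbar

end DVPDA

theorem DVPDA.step_len {Q C I R Γ : Type} (M : DVPDA Q C I R Γ) (a b : Q × List Γ)
    (h : a.2.length = b.2.length) (l : VLetter C I R) :
    (M.step a l).2.length = (M.step b l).2.length := by
  obtain ⟨p, s⟩ := a
  obtain ⟨q, t⟩ := b
  cases l <;> cases s <;> cases t <;> simp_all [DVPDA.step]

theorem DVPDA.run_len {Q C I R Γ : Type} (M : DVPDA Q C I R Γ) (w : List (VLetter C I R)) :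
    ∀ (a b : Q × List Γ), a.2.length = b.2.length →
    (M.run a w).2.length = (M.run b w).2.length := by
  induction w with
  | nil => intro a b h; exact h
  | cons l w ih => intro a b h; exact ih _ _ (M.step_len a b h l)

theorem DVPDA.run_empty {Q C I R Γ : Type} (M : DVPDA Q C I R Γ) (w : List (VLetter C I R))
    (p r : Q) (h : M.run (p, []) w = (r, [])) (q : Q) : (M.run (q, []) w).2 = [] := by
  have := M.run_len w (q, []) (p, []) rfl
  rw [h] at this
  exact List.length_eq_zero_iff.mp this

theorem DVPDA.exists_sync {Q C I R Γ : Type} [Nonempty Q] (M : DVPDA Q C I R Γ)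
    (H : ∀ p q : Q, ∃ (w : List (VLetter C I R)) (r : Q),
      M.run (p, []) w = (r, []) ∧ M.run (q, []) w = (r, [])) (S : Finset Q) :
    ∃ (w : List (VLetter C I R)) (r : Q), (∀ q, (M.run (q, []) w).2 = []) ∧
      ∀ q ∈ S, M.run (q, []) w = (r, []) := by
  classical
  induction S using Finset.induction_on with
  | empty => exact ⟨[], Classical.arbitrary Q, fun _ => rfl, by simp⟩
  | insert a S _ ih =>
    obtain ⟨w, r, h1, h2⟩ := ih
    obtain ⟨v, t, h3, h4⟩ := H (M.run (a, []) w).1 r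
    have e : ∀ q, M.run (q, []) (w ++ v) = M.run ((M.run (q, []) w).1, []) v := by
      intro q
      have : M.run (q, []) w = ((M.run (q, []) w).1, []) := Prod.ext rfl (h1 q)
      rw [← this]
      simp [DVPDA.run]
    refine ⟨w ++ v, t, fun q => ?_, fun q hq => ?_⟩
    · rw [e]
      exact M.run_empty v _ _ h4 _
    · rw [e]
      rcases Finset.mem_insert.mp hq with rfl | hq
      · exact h3
      · rw [h2 q hq]
        exact h4

/-- A DVPDA `M` has a synchronizing word in the empty stack model iff
every pair of states `p, q` can be synchronized in the empty stack model, i.e. there are a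
word `w` and a state `r` with `(p, ⊥) →^w (r, ⊥)` and `(q, ⊥) →^w (r, ⊥)`. -/
theorem dvpda_syncEmpty_iff_pairwise
    {Q C I R Γ : Type} [Fintype Q] [Nonempty Q] (M : DVPDA Q C I R Γ) :
    (∃ w : List (VLetter C I R), M.SyncEmpty w) ↔
    (∀ p q : Q, ∃ (w : List (VLetter C I R)) (r : Q),
      M.run (p, []) w = (r, []) ∧ M.run (q, []) w = (r, [])) := by
  constructor
  · rintro ⟨w, r, h⟩ p q
    exact ⟨w, r, h p, h q⟩
  · intro H
    obtain ⟨w, r, -, h⟩ := M.exists_sync H Finset.univ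
    exact ⟨w, r, fun q => h q (Finset.mem_univ q)⟩
end

section
/- For every deterministic visibly push-down automaton M with Σ_ret = ∅: M has a synchronizing word in the empty stack model if and only if the DFA A = (Q, Σ_int, δ_i) obtained by restricting M to its internal letters has a synchronizing word. -/
theorem DVPDA.run_int_aux {Q C I R Γ : Type} (M : DVPDA Q C I R Γ) (w : List I) :
    ∀ (q : Q) (s : List Γ), M.run (q, s) (w.map VLetter.int) = (w.foldl M.δi q, s) := by
  induction w with
  | nil => intro q s; rfl
  | cons a w ih => intro q s; exact ih (M.δi q a) s

theorem DVPDA.run_len_aux {Q C I Γ : Type} (M : DVPDA Q C I Empty Γ)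
    (w : List (VLetter C I Empty)) :
    ∀ (q : Q) (s : List Γ), s.length ≤ (M.run (q, s) w).2.length := by
  induction w with
  | nil => intro q s; exact le_refl _
  | cons a w ih =>
    intro q s
    cases a with
    | call c => exact le_trans (Nat.le_succ _) (ih (M.δc q c).1 ((M.δc q c).2 :: s))
    | int i => exact ih (M.δi q i) s
    | ret r => exact r.elim

theorem DVPDA.word_int_aux {Q C I Γ : Type} (M : DVPDA Q C I Empty Γ)
    (w : List (VLetter C I Empty)) :
    ∀ (q : Q) (s : List Γ), (M.run (q, s) w).2.length = s.length →
      ∃ v : List I, w = v.map VLetter.int := by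
  induction w with
  | nil => intro q s _; exact ⟨[], rfl⟩
  | cons a w ih =>
    intro q s h
    cases a with
    | call c =>
      have h1 := M.run_len_aux w (M.δc q c).1 ((M.δc q c).2 :: s)
      have h2 : (M.run ((M.δc q c).1, (M.δc q c).2 :: s) w).2.length = s.length := h
      rw [h2, List.length_cons] at h1
      omega
    | int i =>
      obtain ⟨v, rfl⟩ := ih (M.δi q i) s h
      exact ⟨i :: v, rfl⟩
    | ret r => exact r.elim

/-- For every DVPDA `M` with `Σ_ret = ∅`: `M` has a synchronizing word in
the empty stack model iff the DFA `A = (Q, Σ_int, δ_i)` obtained by restricting `M` to its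
internal letters has a synchronizing word. -/
theorem dvpda_no_ret_syncEmpty_iff_internal_dfa_sync
    {Q C I Γ : Type} [Fintype Q] (M : DVPDA Q C I Empty Γ) :
    (∃ w : List (VLetter C I Empty), M.SyncEmpty w) ↔
    (∃ (w : List I) (qbar : Q), ∀ q : Q, w.foldl M.δi q = qbar) := by
  constructor
  · rintro ⟨w, qbar, h⟩
    obtain ⟨v, rfl⟩ := M.word_int_aux w qbar [] (by rw [h qbar])
    refine ⟨v, qbar, fun q => ?_⟩
    have h1 := h q
    rw [M.run_int_aux] at h1
    exact congrArg Prod.fst h1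
  · rintro ⟨v, qbar, h⟩
    refine ⟨v.map VLetter.int, qbar, fun q => ?_⟩
    rw [M.run_int_aux, h q]
end

section
/- Let M be a deterministic visibly push-down automaton with Σ_ret ≠ ∅. Then: (i) every word that synchronizes M in the empty stack model also synchronizes M in the same stack model; (ii) for every word w that synchronizes M in the same stack model there exists a word w' ∈ Σ_ret* such that ww' synchronizes M in the empty stack model. Consequently, M has a synchronizing word in the same stack model if and only if M has a synchronizing word in the empty stack model. -/
theorem DVPDA.run_rets_empty {Q C I R Γ : Type} (M : DVPDA Q C I R Γ) (r : R) :
    ∀ (s : List Γ) (q : Q), ∃ q' : Q,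
      M.run (q, s) ((List.replicate s.length r).map VLetter.ret) = (q', [])
  | [], q => ⟨q, rfl⟩
  | γ :: s, q => DVPDA.run_rets_empty M r s (M.δr q r (some γ))

/-- Let `M` be a DVPDA with `Σ_ret ≠ ∅`. Then (i) every word synchronizing
`M` in the empty stack model also synchronizes `M` in the same stack model; (ii) every word
`w` synchronizing `M` in the same stack model can be extended by a word `w' ∈ Σ_ret*` such
that `w ++ w'` synchronizes `M` in the empty stack model. Consequently, `M` has a
synchronizing word in the same stack model iff it has one in the empty stack model. -/
theorem dvpda_ret_syncSame_iff_syncEmpty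
    {Q C I R Γ : Type} [Fintype Q] [Nonempty R] (M : DVPDA Q C I R Γ) :
    (∀ w : List (VLetter C I R), M.SyncEmpty w → M.SyncSame w) ∧
    (∀ w : List (VLetter C I R), M.SyncSame w →
      ∃ w' : List R, M.SyncEmpty (w ++ w'.map VLetter.ret)) ∧
    ((∃ w : List (VLetter C I R), M.SyncSame w) ↔
      (∃ w : List (VLetter C I R), M.SyncEmpty w)) := by
  have h1 : ∀ w : List (VLetter C I R), M.SyncEmpty w → M.SyncSame w :=
    fun w ⟨q, h⟩ => ⟨q, [], h⟩
  have h2 : ∀ w : List (VLetter C I R), M.SyncSame w →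
      ∃ w' : List R, M.SyncEmpty (w ++ w'.map VLetter.ret) := by
    rintro w ⟨q, s, h⟩
    obtain ⟨r⟩ := ‹Nonempty R›
    obtain ⟨q', hq⟩ := DVPDA.run_rets_empty M r s q
    refine ⟨List.replicate s.length r, q', fun p => ?_⟩
    have hp := h p
    unfold DVPDA.run at hp hq ⊢
    rw [List.foldl_append, hp, hq]
  refine ⟨h1, h2, ?_, ?_⟩
  · rintro ⟨w, h⟩
    obtain ⟨w', h'⟩ := h2 w h
    exact ⟨_, h'⟩
  · rintro ⟨w, h⟩
    exact ⟨w, h1 w h⟩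
end

section
/- Let A = (Q, Σ, δ) be a DFA and S ⊆ Q, and let M be the DVPDA constructed from A and S as described in the context. Then M has a synchronizing word in the same stack model if and only if there exists a word w ∈ Σ* with δ(Q, w) ⊆ S. -/
/-- The DVPDA constructed from a DFA `A = (Q, Σ, δ)` and a subset `S ⊆ Q` in the reduction
from `DFA-Sync-Into-Subset` to `Sync-DVPDA-Same`: states `Q ∪ {q_S}` (`q_S = Sum.inr ()`),
one call letter `a`, internal letters `Σ`, no return letters, and stack symbols
`{s₊, s₋, ⊥}` (`s₊ = true`, `s₋ = false`).  Internal letters act as `δ` on `Q` and loop on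
`q_S`; the call letter maps `q_S` and all states of `S` to `q_S` pushing `s₊`, and loops on
states outside `S` pushing `s₋`. -/
def syncIntoDVPDA {Q A : Type} (δ : Q → A → Q) (S : Set Q) [DecidablePred (· ∈ S)] :
    DVPDA (Q ⊕ Unit) Unit A Empty Bool where
  δc := fun s _ => match s with
    | Sum.inr _ => (Sum.inr (), true)
    | Sum.inl p => if p ∈ S then (Sum.inr (), true) else (Sum.inl p, false)
  δi := fun s σ => match s with
    | Sum.inr _ => Sum.inr ()
    | Sum.inl p => Sum.inl (δ p σ)
  δr := fun _ e _ => e.elim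

def leadInt {A : Type} : List (VLetter Unit A Empty) → List A
  | .int a :: w => a :: leadInt w
  | _ => []

theorem run_suffix_aux {Q A : Type} (δ : Q → A → Q) (S : Set Q) [DecidablePred (· ∈ S)]
    (w : List (VLetter Unit A Empty)) : ∀ (x : Q ⊕ Unit) (s : List Bool),
    s <:+ ((syncIntoDVPDA δ S).run (x, s) w).2 := by
  induction w with
  | nil => intro x s; exact List.suffix_refl _
  | cons l w ih =>
    intro x s
    cases l with
    | call c => exact (List.suffix_cons _ s).trans (ih _ _)
    | int a => exact ih _ _
    | ret r => exact r.elim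

theorem leadInt_mem_aux {Q A : Type} (δ : Q → A → Q) (S : Set Q) [DecidablePred (· ∈ S)]
    (w : List (VLetter Unit A Empty)) : ∀ (q : Q) (s : List Bool),
    (syncIntoDVPDA δ S).run (Sum.inl q, s) w = (syncIntoDVPDA δ S).run (Sum.inr (), s) w →
    (leadInt w).foldl δ q ∈ S := by
  induction w with
  | nil => intro q s h; simp [DVPDA.run] at h
  | cons l w ih =>
    intro q s h
    cases l with
    | call c =>
      by_cases hq : q ∈ S
      · exact hq
      · exfalso
        have h' : (syncIntoDVPDA δ S).run (Sum.inl q, false :: s) w =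
            (syncIntoDVPDA δ S).run (Sum.inr (), true :: s) w := by
          simpa [DVPDA.run, DVPDA.step, syncIntoDVPDA, hq] using h
        have h1 := run_suffix_aux δ S w (Sum.inl q) (false :: s)
        have h2 := run_suffix_aux δ S w (Sum.inr ()) (true :: s)
        rw [h'] at h1
        have h3 := (List.suffix_of_suffix_length_le h1 h2 (by simp)).eq_of_length (by simp)
        simp at h3
    | int a => exact ih (δ q a) s h
    | ret r => exact r.elim

theorem run_map_inl_aux {Q A : Type} (δ : Q → A → Q) (S : Set Q) [DecidablePred (· ∈ S)]
    (w : List A) : ∀ (q : Q) (s : List Bool),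
    (w.map VLetter.int).foldl (syncIntoDVPDA δ S).step (Sum.inl q, s) =
      (Sum.inl (w.foldl δ q), s) := by
  induction w with
  | nil => intro q s; rfl
  | cons a w ih => intro q s; exact ih (δ q a) s

theorem run_map_inr_aux {Q A : Type} (δ : Q → A → Q) (S : Set Q) [DecidablePred (· ∈ S)]
    (w : List A) : ∀ (s : List Bool),
    (w.map VLetter.int).foldl (syncIntoDVPDA δ S).step (Sum.inr (), s) =
      (Sum.inr (), s) := by
  induction w with
  | nil => intro s; rfl
  | cons a w ih => intro s; exact ih s

/-- The DVPDA `M` constructed from a DFA `A = (Q, Σ, δ)` and `S ⊆ Q` has a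
synchronizing word in the same stack model iff there is a word `w ∈ Σ*` with
`δ(Q, w) ⊆ S`. -/
theorem syncIntoDVPDA_syncSame_iff
    {Q A : Type} [Fintype Q] (δ : Q → A → Q) (S : Set Q) [DecidablePred (· ∈ S)] :
    (∃ w : List (VLetter Unit A Empty), (syncIntoDVPDA δ S).SyncSame w) ↔
    (∃ w : List A, ∀ q : Q, w.foldl δ q ∈ S) := by
  constructor
  · rintro ⟨w, qbar, υ, h⟩
    exact ⟨leadInt w, fun q =>
      leadInt_mem_aux δ S w q [] ((h (Sum.inl q)).trans (h (Sum.inr ())).symm)⟩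
  · rintro ⟨w, h⟩
    refine ⟨w.map VLetter.int ++ [VLetter.call ()], Sum.inr (), [true], ?_⟩
    rintro (q | ⟨⟩)
    · rw [DVPDA.run, List.foldl_append, run_map_inl_aux]
      simp [DVPDA.step, syncIntoDVPDA, h q]
    · rw [DVPDA.run, List.foldl_append, run_map_inr_aux]
      simp [DVPDA.step, syncIntoDVPDA]
end

section
/- Let A = (Q, Σ, δ) be a DFA, S ⊆ Q, and t ∈ S a fixed state, and let M be the DVPDA constructed from A, S, and t as described in the context. Then M has a synchronizing word in the arbitrary stack model if and only if there exists a word w ∈ Σ* that synchronizes the subset S in A, i.e., with |δ(S, w)| = 1. -/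
/-- The DVPDA constructed from a DFA `A = (Q, Σ, δ)`, a subset `S ⊆ Q`, and a fixed state
`t ∈ S` in the reduction from `DFA-Sync-From-Subset` to `Sync-DVPDA-Arb`: states `Q`, call
letters `Σ`, no internal letters, one return letter `r`, stack alphabet `Q ∪ {⊥}`.  A call
letter `σ` maps `q` to `δ(q, σ)` pushing `q`; the return letter `r` on bottom symbol `⊥`
fixes states of `S` and maps states outside `S` to `t`, and on a stack symbol `p ∈ Q` it
pops and moves to `p`. -/
def fromSubsetDVPDA {Q A : Type} (δ : Q → A → Q) (S : Set Q) [DecidablePred (· ∈ S)]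
    (t : Q) : DVPDA Q A Empty Unit Q where
  δc := fun q σ => (δ q σ, q)
  δi := fun _ e => e.elim
  δr := fun q _ g => match g with
    | none => if q ∈ S then q else t
    | some p => p

def auxStack {Q A : Type} (δ : Q → A → Q) (q : Q) : List A → List Q
  | [] => []
  | _ :: u => u.foldr (fun a p => δ p a) q :: auxStack δ q u

theorem aux_run {Q A : Type} (δ : Q → A → Q) (S : Set Q) [DecidablePred (· ∈ S)] (t : Q)
    (w : List (VLetter A Empty Unit)) : ∀ u : List A, ∃ u' : List A, ∀ q ∈ S,
      (fromSubsetDVPDA δ S t).run (u.foldr (fun a p => δ p a) q, auxStack δ q u) w =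
        (u'.foldr (fun a p => δ p a) q, auxStack δ q u') := by
  induction w with
  | nil => exact fun u => ⟨u, fun q _ => rfl⟩
  | cons l w ih =>
    intro u
    cases l with
    | call c =>
      obtain ⟨u', h⟩ := ih (c :: u)
      exact ⟨u', fun q hq => h q hq⟩
    | int i => exact i.elim
    | ret r =>
      cases u with
      | nil =>
        obtain ⟨u', h⟩ := ih []
        refine ⟨u', fun q hq => ?_⟩
        rw [← h q hq]
        simp [DVPDA.run, DVPDA.step, auxStack, fromSubsetDVPDA, hq]
      | cons a u =>
        obtain ⟨u', h⟩ := ih u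
        exact ⟨u', fun q hq => h q hq⟩

theorem aux_calls {Q A : Type} (δ : Q → A → Q) (S : Set Q) [DecidablePred (· ∈ S)] (t : Q)
    (w : List A) : ∀ (q : Q) (s : List Q),
      ((fromSubsetDVPDA δ S t).run (q, s) (w.map VLetter.call)).1 = w.foldl δ q := by
  induction w with
  | nil => exact fun q s => rfl
  | cons a w ih => exact fun q s => ih (δ q a) (q :: s)

/-- The DVPDA `M` constructed from a DFA `A = (Q, Σ, δ)`, `S ⊆ Q` and a
fixed `t ∈ S` has a synchronizing word in the arbitrary stack model iff there is a word
`w ∈ Σ*` synchronizing the subset `S` in `A`, i.e. with `|δ(S, w)| = 1`. -/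
theorem fromSubsetDVPDA_syncArb_iff
    {Q A : Type} [Fintype Q] (δ : Q → A → Q) (S : Set Q) [DecidablePred (· ∈ S)]
    (t : Q) (ht : t ∈ S) :
    (∃ w : List (VLetter A Empty Unit), (fromSubsetDVPDA δ S t).SyncArb w) ↔
    (∃ (w : List A) (qbar : Q), (fun q => w.foldl δ q) '' S = {qbar}) := by
  constructor
  · rintro ⟨w, qbar, h⟩
    obtain ⟨u, hu⟩ := aux_run δ S t w []
    have key : ∀ q ∈ S, u.reverse.foldl δ q = qbar := by
      intro q hq
      have h1 := congrArg Prod.fst (hu q hq)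
      have h2 := h q
      rw [List.foldl_reverse]
      exact h1.symm.trans h2
    refine ⟨u.reverse, qbar, ?_⟩
    ext x
    constructor
    · rintro ⟨q, hq, rfl⟩
      exact key q hq
    · rintro rfl
      exact ⟨t, ht, key t ht⟩
  · rintro ⟨w, qbar, h⟩
    have key : ∀ q ∈ S, w.foldl δ q = qbar := by
      intro q hq
      have : w.foldl δ q ∈ (fun q => w.foldl δ q) '' S := ⟨q, hq, rfl⟩
      rw [h] at this
      exact this
    refine ⟨VLetter.ret () :: w.map VLetter.call, qbar, fun q => ?_⟩
    refine (aux_calls δ S t w (if q ∈ S then q else t) []).trans (key _ ?_)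
    split_ifs with hq
    · exact hq
    · exact ht
end

section
/- For every deterministic very visibly push-down automaton M, a word w ∈ Σ* synchronizes M in the arbitrary stack model if and only if w synchronizes M in the same stack model. -/
theorem DVPDA.run_stack_eq {Q C I R Γ : Type} (M : DVPDA Q C I R Γ)
    (hvv : ∀ (σ : C) (p q : Q), (M.δc p σ).2 = (M.δc q σ).2)
    (w : List (VLetter C I R)) : ∀ (p q : Q) (s : List Γ),
    (M.run (p, s) w).2 = (M.run (q, s) w).2 := by
  induction w with
  | nil => intro p q s; rfl
  | cons a w ih =>
    intro p q s
    cases a with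
    | call c =>
      show (M.run ((M.δc p c).1, (M.δc p c).2 :: s) w).2
        = (M.run ((M.δc q c).1, (M.δc q c).2 :: s) w).2
      rw [hvv c p q]
      exact ih _ _ _
    | int i => exact ih _ _ _
    | ret r =>
      cases s with
      | nil => exact ih _ _ _
      | cons g s => exact ih _ _ _

/-- For every deterministic very visibly push-down automaton `M`, a word
`w` synchronizes `M` in the arbitrary stack model iff `w` synchronizes `M` in the same
stack model. -/
theorem dvvpda_syncArb_iff_syncSame
    {Q C I R Γ : Type} (M : DVPDA Q C I R Γ)
    (hvv : ∀ (σ : C) (p q : Q), (M.δc p σ).2 = (M.δc q σ).2)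
    (w : List (VLetter C I R)) :
    M.SyncArb w ↔ M.SyncSame w := by
  constructor
  · rintro ⟨qbar, h⟩
    exact ⟨qbar, (M.run (qbar, []) w).2, fun q =>
      Prod.ext (h q) (M.run_stack_eq hvv w q qbar [])⟩
  · rintro ⟨qbar, υ, h⟩
    exact ⟨qbar, fun q => by rw [h q]⟩
end

section
/- For every deterministic very visibly push-down automaton M with Σ_ret ≠ ∅, the following are equivalent: (i) M has a synchronizing word in the empty stack model; (ii) M has a synchronizing word in the same stack model; (iii) M has a synchronizing word in the arbitrary stack model. -/
theorem DVPDA.exists_run_empty {Q C I R Γ : Type} [Nonempty R] (M : DVPDA Q C I R Γ)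
    (s : List Γ) : ∀ q : Q, ∃ (w : List (VLetter C I R)) (q' : Q),
      M.run (q, s) w = (q', []) := by
  induction s with
  | nil => intro q; exact ⟨[], q, rfl⟩
  | cons g s ih =>
    intro q
    obtain ⟨r⟩ := ‹Nonempty R›
    obtain ⟨w, q', h⟩ := ih (M.δr q r (some g))
    exact ⟨.ret r :: w, q', h⟩

/-- For every deterministic very visibly push-down automaton `M` with
`Σ_ret ≠ ∅`, the following are equivalent: `M` has a synchronizing word in the empty stack
model; in the same stack model; in the arbitrary stack model. -/
theorem dvvpda_ret_sync_models_equivalent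
    {Q C I R Γ : Type} [Fintype Q] [Nonempty R] (M : DVPDA Q C I R Γ)
    (hvv : ∀ (σ : C) (p q : Q), (M.δc p σ).2 = (M.δc q σ).2) :
    ((∃ w : List (VLetter C I R), M.SyncEmpty w) ↔
      (∃ w : List (VLetter C I R), M.SyncSame w)) ∧
    ((∃ w : List (VLetter C I R), M.SyncSame w) ↔
      (∃ w : List (VLetter C I R), M.SyncArb w)) := by
  refine ⟨⟨?_, ?_⟩, ⟨?_, ?_⟩⟩
  · rintro ⟨w, q, h⟩
    exact ⟨w, q, [], h⟩
  · rintro ⟨w, q, υ, h⟩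
    obtain ⟨w', q', h'⟩ := M.exists_run_empty υ q
    refine ⟨w ++ w', q', fun p => ?_⟩
    have hp := h p
    unfold DVPDA.run at *
    rw [List.foldl_append, hp, h']
  · rintro ⟨w, q, υ, h⟩
    exact ⟨w, q, fun p => by rw [h p]⟩
  · rintro ⟨w, q, h⟩
    exact ⟨w, q, (M.run (q, []) w).2, fun p => Prod.ext (h p) (M.run_stack_eq hvv w p q [])⟩
end

section
/- Let M be a deterministic visibly push-down automaton. Then: (i) every 0-turn synchronizing word for M in the empty stack model contains no letter of Σ_call; and (ii) M has a 0-turn synchronizing word in the empty stack model if and only if the DFA A' = (Q, Σ_int ∪ Σ_ret, δ') has a synchronizing word, where δ'(q, σ) = δ_i(q, σ) for σ ∈ Σ_int and δ'(q, σ) = δ_r(q, σ, ⊥) for σ ∈ Σ_ret. -/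
/-- `AtMostStrokes h len m`: the height sequence `h 0, h 1, …, h len` can be split into at
most `m` strokes, i.e. there are breakpoints `0 = i₀ ≤ i₁ ≤ ⋯ ≤ i_m = len` such that on each
segment the heights are monotone non-decreasing (an upstroke) or monotone non-increasing
(a downstroke). -/
def AtMostStrokes (h : ℕ → ℕ) (len m : ℕ) : Prop :=
  ∃ br : Fin (m+1) → ℕ, br 0 = 0 ∧ br (Fin.last m) = len ∧ Monotone br ∧
    ∀ j : Fin m,
      (∀ a b : ℕ, br j.castSucc ≤ a → a ≤ b → b ≤ br j.succ → h a ≤ h b) ∨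
      (∀ a b : ℕ, br j.castSucc ≤ a → a ≤ b → b ≤ br j.succ → h b ≤ h a)

/-- Every run of `M` on `w` (started with empty stack) consists of at most `n+1` strokes,
i.e. it makes at most `n` turns. -/
def DVPDA.NTurnRun {Q C I R Γ : Type} (M : DVPDA Q C I R Γ) (n : ℕ)
    (w : List (VLetter C I R)) : Prop :=
  ∀ q : Q, AtMostStrokes (fun k => ((M.run (q, []) (w.take k)).2).length) w.length (n+1)

theorem aux_run_s12 {Q C I R Γ : Type} (M : DVPDA Q C I R Γ) (f : Q → I ⊕ R → Q)
    (hl : ∀ p i, f p (Sum.inl i) = M.δi p i) (hr : ∀ p ρ, f p (Sum.inr ρ) = M.δr p ρ none)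
    (w : List (I ⊕ R)) : ∀ q : Q,
    M.run (q, []) (w.map (Sum.elim VLetter.int VLetter.ret : I ⊕ R → VLetter C I R))
      = (w.foldl f q, []) := by
  induction w with
  | nil => intro q; rfl
  | cons a w ih =>
    intro q
    rcases a with i | ρ
    · have := ih (f q (Sum.inl i))
      simpa [DVPDA.run, DVPDA.step, hl] using this
    · have := ih (f q (Sum.inr ρ))
      simpa [DVPDA.run, DVPDA.step, hr] using this

theorem aux_fst {Q C I R Γ : Type} (M : DVPDA Q C I R Γ) (f : Q → I ⊕ R → Q)
    (hl : ∀ p i, f p (Sum.inl i) = M.δi p i) (hr : ∀ p ρ, f p (Sum.inr ρ) = M.δr p ρ none)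
    (w : List (I ⊕ R)) (q qbar : Q)
    (h : M.run (q, []) (w.map (Sum.elim VLetter.int VLetter.ret : I ⊕ R → VLetter C I R))
      = (qbar, [])) : w.foldl f q = qbar := by
  rw [aux_run_s12 M f hl hr w q] at h
  exact (Prod.mk.inj h).1

theorem aux_lift {C I R : Type} (w : List (VLetter C I R))
    (h : ∀ l ∈ w, ∀ c : C, l ≠ VLetter.call c) :
    ∃ v : List (I ⊕ R),
      v.map (Sum.elim VLetter.int VLetter.ret : I ⊕ R → VLetter C I R) = w := by
  induction w with
  | nil => exact ⟨[], rfl⟩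
  | cons a w ih =>
    obtain ⟨v, hv⟩ := ih (fun l hl => h l (List.mem_cons_of_mem _ hl))
    cases a with
    | call c => exact absurd rfl (h _ List.mem_cons_self c)
    | int i => exact ⟨Sum.inl i :: v, by simp [hv]⟩
    | ret ρ => exact ⟨Sum.inr ρ :: v, by simp [hv]⟩

theorem aux_nocall {Q C I R Γ : Type} (M : DVPDA Q C I R Γ) (w : List (VLetter C I R))
    (hs : M.SyncEmpty w) (hn : M.NTurnRun 0 w) :
    ∀ l ∈ w, ∀ c : C, l ≠ VLetter.call c := by
  rintro l hl c rfl
  obtain ⟨q, hq⟩ := hs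
  obtain ⟨k, hk, hkc⟩ := List.getElem_of_mem hl
  obtain ⟨br, h0, h1, -, hj⟩ := hn q
  have hj := hj 0
  have e0 : br (Fin.castSucc (0 : Fin (0 + 1))) = 0 := h0
  have e1 : br (Fin.succ (0 : Fin (0 + 1))) = w.length := h1
  rw [e0, e1] at hj
  have hstep : 0 < ((M.run (q, []) (w.take (k + 1))).2).length := by
    rw [List.take_succ_eq_append_getElem hk, hkc]
    simp [DVPDA.run, DVPDA.step]
  have hend : ((M.run (q, []) (w.take w.length)).2).length = 0 := by
    rw [List.take_length, hq q]; rfl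
  have hstart : ((M.run (q, []) (w.take 0)).2).length = 0 := by
    simp [DVPDA.run]
  rcases hj with hj | hj
  · have := hj (k + 1) w.length (Nat.zero_le _) hk le_rfl
    simp only at this
    omega
  · have := hj 0 (k + 1) le_rfl (Nat.zero_le _) hk
    simp only at this
    omega

/-- For every DVPDA `M`: (i) every 0-turn synchronizing word for `M` in
the empty stack model contains no call letter; (ii) `M` has a 0-turn synchronizing word in
the empty stack model iff the DFA `A' = (Q, Σ_int ∪ Σ_ret, δ')` has a synchronizing word,
where `δ'(q, σ) = δ_i(q, σ)` for `σ ∈ Σ_int` and `δ'(q, σ) = δ_r(q, σ, ⊥)` for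
`σ ∈ Σ_ret`. -/
theorem dvpda_zero_turn_syncEmpty
    {Q C I R Γ : Type} [Fintype Q] (M : DVPDA Q C I R Γ) :
    (∀ w : List (VLetter C I R), M.SyncEmpty w → M.NTurnRun 0 w →
      ∀ l ∈ w, ∀ c : C, l ≠ VLetter.call c) ∧
    ((∃ w : List (VLetter C I R), M.SyncEmpty w ∧ M.NTurnRun 0 w) ↔
      (∃ (w : List (I ⊕ R)) (qbar : Q), ∀ q : Q,
        w.foldl (fun p l => match l with
          | Sum.inl i => M.δi p i
          | Sum.inr ρ => M.δr p ρ none) q = qbar)) := by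
  refine ⟨fun w hs hn => aux_nocall M w hs hn, ?_, ?_⟩
  · rintro ⟨w, hs, hn⟩
    obtain ⟨v, rfl⟩ := aux_lift w (aux_nocall M w hs hn)
    obtain ⟨qbar, hq⟩ := hs
    refine ⟨v, qbar, fun q => ?_⟩
    have h := hq q
    refine aux_fst M _ ?_ ?_ v q qbar h
    · intro _ _; rfl
    · intro _ _; rfl
  · rintro ⟨v, qbar, hq⟩
    refine ⟨v.map (Sum.elim VLetter.int VLetter.ret), ⟨qbar, fun q => ?_⟩, fun q => ?_⟩
    · rw [← hq q]
      exact aux_run_s12 M _ (fun _ _ => rfl) (fun _ _ => rfl) v q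
    · have hz : ∀ k, ((M.run (q, []) ((v.map (Sum.elim VLetter.int VLetter.ret :
          I ⊕ R → VLetter C I R)).take k)).2).length = 0 := by
        intro k
        rw [← List.map_take, aux_run_s12 M (fun p l => Sum.elim (M.δi p) (fun ρ => M.δr p ρ none) l)
          (fun _ _ => rfl) (fun _ _ => rfl)]
        rfl
      refine ⟨fun j => if j = 0 then 0 else (v.map (Sum.elim VLetter.int VLetter.ret :
          I ⊕ R → VLetter C I R)).length, by simp, by simp, ?_, ?_⟩
      · intro a b hab
        by_cases ha : a = 0
        · simp [ha]
        · have hb : b ≠ 0 := by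
            rintro rfl
            exact ha (Fin.le_zero_iff.mp hab)
          simp [ha, hb]
      · intro j
        left
        intro a b _ _ _
        simp only [hz]
        exact le_rfl
end

section
/- For every deterministic visibly counter automaton M and every even n > 0: M has an n-turn synchronizing word in the empty stack model if and only if M has an (n−1)-turn synchronizing word in the empty stack model. -/
def StrokesN (h : ℕ → ℕ) (len m : ℕ) : Prop :=
  ∃ br : ℕ → ℕ, br 0 = 0 ∧ br m = len ∧ Monotone br ∧
    ∀ j < m,
      (∀ a b : ℕ, br j ≤ a → a ≤ b → b ≤ br (j+1) → h a ≤ h b) ∨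
      (∀ a b : ℕ, br j ≤ a → a ≤ b → b ≤ br (j+1) → h b ≤ h a)

theorem strokesN_iff (h : ℕ → ℕ) (len m : ℕ) : AtMostStrokes h len m ↔ StrokesN h len m := by
  constructor
  · rintro ⟨br, h0, hl, hm, hs⟩
    have key : ∀ j (hj : j < m + 1), br ⟨min j m, by omega⟩ = br ⟨j, hj⟩ := by
      intro j hj
      congr 1
      apply Fin.ext
      simp only
      omega
    refine ⟨fun j => br ⟨min j m, by omega⟩, ?_, ?_, ?_, ?_⟩
    · exact (key 0 (by omega)).trans h0
    · exact (key m (by omega)).trans hl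
    · intro a b hab
      apply hm
      simp only [Fin.mk_le_mk]
      omega
    · intro j hj
      have := hs ⟨j, hj⟩
      simp only
      rw [key j (by omega), key (j+1) (by omega)]
      exact this
  · rintro ⟨br, h0, hl, hm, hs⟩
    refine ⟨fun j => br j, h0, hl, ?_, ?_⟩
    · intro a b hab
      exact hm hab
    · intro j
      exact hs j j.2

theorem strokesN_succ {h : ℕ → ℕ} {len m : ℕ} (H : StrokesN h len m) :
    StrokesN h len (m+1) := by
  obtain ⟨br, h0, hl, hm, hs⟩ := H
  refine ⟨fun j => br (min j m), by simpa using h0, by simpa using hl, ?_, ?_⟩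
  · intro a b hab
    apply hm
    omega
  · intro j hj
    by_cases hjm : j < m
    · have e1 : min j m = j := by omega
      have e2 : min (j+1) m = j+1 := by omega
      simp only [e1, e2]
      exact hs j hjm
    · have e1 : min j m = m := by omega
      have e2 : min (j+1) m = m := by omega
      simp only [e1, e2]
      left
      intro a b h1 h2 h3
      have : a = b := by omega
      rw [this]

theorem strokesN_merge {h : ℕ → ℕ} {len m : ℕ} (br : ℕ → ℕ) (h0 : br 0 = 0)
    (hl : br (m+1) = len) (hm : Monotone br)
    (hs : ∀ j < m+1,
      (∀ a b : ℕ, br j ≤ a → a ≤ b → b ≤ br (j+1) → h a ≤ h b) ∨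
      (∀ a b : ℕ, br j ≤ a → a ≤ b → b ≤ br (j+1) → h b ≤ h a))
    (i : ℕ) (hi : i < m)
    (hmg : (∀ a b : ℕ, br i ≤ a → a ≤ b → b ≤ br (i+2) → h a ≤ h b) ∨
      (∀ a b : ℕ, br i ≤ a → a ≤ b → b ≤ br (i+2) → h b ≤ h a)) :
    StrokesN h len m := by
  refine ⟨fun j => if j ≤ i then br j else br (j+1), by simpa using h0, ?_, ?_, ?_⟩
  · simp only [if_neg (not_le.mpr hi), hl]
  · intro a b hab
    simp only
    split_ifs <;> apply hm <;> omega
  · intro j hj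
    rcases lt_trichotomy j i with hji | hji | hji
    · simp only [if_pos hji.le, if_pos (show j + 1 ≤ i from hji)]
      exact hs j (by omega)
    · subst hji
      simp only [le_refl, if_true, if_neg (show ¬ j + 1 ≤ j by omega)]
      exact hmg
    · simp only [if_neg (not_le.mpr hji), if_neg (show ¬ j + 1 ≤ i by omega)]
      exact hs (j+1) (by omega)

theorem strokesN_even {h : ℕ → ℕ} {len n : ℕ} (hn : 0 < n) (hev : Even n)
    (hh0 : h 0 = 0) (hhl : h len = 0) (H : StrokesN h len (n+1)) : StrokesN h len n := by
  obtain ⟨br, h0, hl, hm, hs⟩ := H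
  by_contra hcon
  have nm : ∀ i < n, ¬ ((∀ a b : ℕ, br i ≤ a → a ≤ b → b ≤ br (i+2) → h a ≤ h b) ∨
      (∀ a b : ℕ, br i ≤ a → a ≤ b → b ≤ br (i+2) → h b ≤ h a)) :=
    fun i hi hc => hcon (strokesN_merge br h0 hl hm hs i hi hc)
  have nU : ∀ i < n, (∀ a b : ℕ, br i ≤ a → a ≤ b → b ≤ br (i+1) → h a ≤ h b) →
      (∀ a b : ℕ, br (i+1) ≤ a → a ≤ b → b ≤ br (i+2) → h a ≤ h b) → False := by
    intro i hi u1 u2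
    refine nm i hi (Or.inl ?_)
    intro a b ha hab hb
    have m1 : br i ≤ br (i+1) := hm (by omega)
    have m2 : br (i+1) ≤ br (i+2) := hm (by omega)
    by_cases c1 : b ≤ br (i+1)
    · exact u1 a b ha hab c1
    by_cases c2 : br (i+1) ≤ a
    · exact u2 a b c2 hab hb
    exact (u1 a _ ha (by omega) le_rfl).trans (u2 _ b le_rfl (by omega) hb)
  have nD : ∀ i < n, (∀ a b : ℕ, br i ≤ a → a ≤ b → b ≤ br (i+1) → h b ≤ h a) →
      (∀ a b : ℕ, br (i+1) ≤ a → a ≤ b → b ≤ br (i+2) → h b ≤ h a) → False := by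
    intro i hi u1 u2
    refine nm i hi (Or.inr ?_)
    intro a b ha hab hb
    have m1 : br i ≤ br (i+1) := hm (by omega)
    have m2 : br (i+1) ≤ br (i+2) := hm (by omega)
    by_cases c1 : b ≤ br (i+1)
    · exact u1 a b ha hab c1
    by_cases c2 : br (i+1) ≤ a
    · exact u2 a b c2 hab hb
    exact (u2 _ b le_rfl (by omega) hb).trans (u1 a _ ha (by omega) le_rfl)
  have hU0 : ∀ a b : ℕ, br 0 ≤ a → a ≤ b → b ≤ br (0+1) → h a ≤ h b := by
    rcases hs 0 (by omega) with u | d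
    · exact u
    · intro a b ha hab hb
      have := d 0 a (by omega) (by omega) (by omega)
      omega
  have hDo : ∀ k, 2*k < n → (∀ a b : ℕ, br (2*k) ≤ a → a ≤ b → b ≤ br (2*k+1) → h a ≤ h b) →
      (∀ a b : ℕ, br (2*k+1) ≤ a → a ≤ b → b ≤ br (2*k+2) → h b ≤ h a) := by
    intro k hk u
    exact (hs (2*k+1) (by omega)).resolve_left (fun u2 => nU _ hk u u2)
  have hU : ∀ k, 2*k ≤ n → (∀ a b : ℕ, br (2*k) ≤ a → a ≤ b → b ≤ br (2*k+1) → h a ≤ h b) := by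
    intro k
    induction k with
    | zero => intro _; exact hU0
    | succ k ih =>
      intro hk
      have d := hDo k (by omega) (ih (by omega))
      exact (hs (2*k+2) (by omega)).resolve_right (fun d2 => nD (2*k+1) (by omega) d d2)
  obtain ⟨k, hk⟩ := hev
  obtain ⟨k, rfl⟩ : ∃ l, k = l + 1 := ⟨k - 1, by omega⟩
  have hn2 : n = 2*k+2 := by omega
  subst hn2
  have u := hU (k+1) (by omega)
  have d := hDo k (by omega) (hU k (by omega))
  refine nD (2*k+1) (by omega) d ?_
  intro a b ha hab hb
  have := u b len (ha.trans hab) (by rw [← hl]; exact hb) (by rw [← hl]; exact le_rfl)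
  omega

/-- For every deterministic visibly counter automaton `M` (a DVPDA with a
single stack symbol besides `⊥`) and every even `n > 0`: `M` has an `n`-turn synchronizing
word in the empty stack model iff `M` has an `(n-1)`-turn synchronizing word in the empty
stack model.  (An `m`-turn run consists of at most `m+1` strokes.) -/
theorem dvca_even_turn_syncEmpty_iff_pred_turn
    {Q C I R : Type} [Fintype Q] (M : DVPDA Q C I R Unit)
    (n : ℕ) (hn : 0 < n) (hev : Even n) :
    (∃ w : List (VLetter C I R), M.SyncEmpty w ∧ M.NTurnRun n w) ↔
    (∃ w : List (VLetter C I R), M.SyncEmpty w ∧ M.NTurnRun (n - 1) w) := by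
  have e : n - 1 + 1 = n := by omega
  constructor
  · rintro ⟨w, hw, ht⟩
    refine ⟨w, hw, fun q => ?_⟩
    rw [e, strokesN_iff]
    obtain ⟨qb, hq⟩ := hw
    refine strokesN_even hn hev ?_ ?_ ((strokesN_iff _ _ _).1 (ht q))
    · simp [DVPDA.run]
    · simp [hq q]
  · rintro ⟨w, hw, ht⟩
    refine ⟨w, hw, fun q => ?_⟩
    have := ht q
    rw [e, strokesN_iff] at this
    rw [strokesN_iff]
    exact strokesN_succ this
end

section
/- Let M be a deterministic visibly push-down automaton with state set Q = {p_1, …, p_n}, and let M^n be the n-fold product automaton of M as described in the context, with start state (p_1, …, p_n) and final states {(q, q, …, q) : q ∈ Q}. Then M^n is a well-defined deterministic visibly push-down automaton, and the language accepted by M^n is exactly the set of words that synchronize M in the arbitrary stack model. -/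
/-- The `n`-fold product of a DVPDA `M`: states are `n`-tuples of states of `M`, the stack
alphabet consists of `n`-tuples of stack symbols (with bottom symbol `(⊥, …, ⊥)`), and all
transitions are performed componentwise. -/
def prodDVPDA {Q C I R Γ : Type} (M : DVPDA Q C I R Γ) (n : ℕ) :
    DVPDA (Fin n → Q) C I R (Fin n → Γ) where
  δc := fun qs σ => (fun j => (M.δc (qs j) σ).1, fun j => (M.δc (qs j) σ).2)
  δi := fun qs σ j => M.δi (qs j) σ
  δr := fun qs σ g => match g with
    | none => fun j => M.δr (qs j) σ none
    | some gs => fun j => M.δr (qs j) σ (some (gs j))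

theorem prodDVPDA_run_proj {Q C I R Γ : Type} (M : DVPDA Q C I R Γ) (n : ℕ) (j : Fin n)
    (w : List (VLetter C I R)) : ∀ (qs : Fin n → Q) (s : List (Fin n → Γ)),
    M.run (qs j, s.map (fun g => g j)) w =
      (((prodDVPDA M n).run (qs, s) w).1 j,
        ((prodDVPDA M n).run (qs, s) w).2.map (fun g => g j)) := by
  induction w with
  | nil => intro qs s; rfl
  | cons a w ih =>
    intro qs s
    cases a with
    | call c => exact ih (fun j => (M.δc (qs j) c).1) ((fun j => (M.δc (qs j) c).2) :: s)
    | int i => exact ih (fun j => M.δi (qs j) i) s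
    | ret r =>
      cases s with
      | nil => exact ih (fun j => M.δr (qs j) r none) []
      | cons g s => exact ih (fun j => M.δr (qs j) r (some (g j))) s

/-- Let `M` be a DVPDA with state set `Q = {p_1, …, p_n}` (given by an
enumeration `e : Fin n ≃ Q`), and let `M^n` be the `n`-fold product DVPDA of `M`, with
start state `(p_1, …, p_n)` and final states `{(q, …, q) : q ∈ Q}`.  Then the language
accepted by `M^n` is exactly the set of words synchronizing `M` in the arbitrary stack
model: a word `w` is accepted (its run from the start state with empty stack ends in a
diagonal state, with any stack content) iff `w` synchronizes `M` in the arbitrary stack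
model.  (That `M^n` is a well-defined DVPDA is witnessed by the definition `prodDVPDA`.) -/
theorem prodDVPDA_accepts_iff_syncArb
    {Q C I R Γ : Type} [Fintype Q] (M : DVPDA Q C I R Γ)
    (n : ℕ) (e : Fin n ≃ Q) (w : List (VLetter C I R)) :
    (∃ qbar : Q,
      ((prodDVPDA M n).run ((fun j => e j), []) w).1 = fun _ => qbar) ↔
    M.SyncArb w := by
  have key : ∀ j, (M.run (e j, []) w).1 =
      ((prodDVPDA M n).run ((fun j => e j), []) w).1 j := fun j =>
    congrArg Prod.fst (prodDVPDA_run_proj M n j w (fun j => e j) [])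
  constructor
  · rintro ⟨q, h⟩
    refine ⟨q, fun p => ?_⟩
    have := key (e.symm p)
    rw [h, e.apply_symm_apply] at this
    exact this
  · rintro ⟨q, h⟩
    refine ⟨q, funext fun j => ?_⟩
    rw [← key j]
    exact h _
end

section
/- Let M be a deterministic visibly push-down automaton with state set Q = {p_1, …, p_n}, and let M^n_same be the automaton obtained from the n-fold product M^n by adding the states q_check, q_fin, q_fail and a new return letter r as described in the context, with start state (p_1, …, p_n) and single final state q_fin. Then M^n_same is a deterministic visibly push-down automaton, and its accepted language is nonempty if and only if M has a synchronizing word in the same stack model. -/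
/-- The states of `M^n_same`: the product states together with the three additional states
`q_check`, `q_fin` and `q_fail`. -/
inductive ExtState (X : Type) : Type
  | base  : X → ExtState X
  | check : ExtState X
  | fin   : ExtState X
  | fail  : ExtState X

open Classical in
/-- The DVPDA `M^n_same` obtained from the `n`-fold product `M^n` by adding the states
`q_check`, `q_fin`, `q_fail` and a new return letter `r` (the letter `Sum.inr ()`): from a
product state `(q_1, …, q_n)` with non-bottom top-of-stack `(γ_1, …, γ_n)`, the letter `r`
leads to `q_check` if all `q_i` are equal and all `γ_i` are equal, and to `q_fail`
otherwise; with bottom `⊥` on top, `r` leads to `q_fin` if all `q_i` are equal and to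
`q_fail` otherwise; from `q_check`, `r` pops and stays in `q_check` if the top-of-stack
tuple has all entries equal (and is not the bottom symbol), leads to `q_fin` on the bottom
symbol, and to `q_fail` otherwise; `q_check` moves to `q_fail` on every other input letter;
`q_fail` is a (non-accepting) trap state and `q_fin` an (accepting) trap state. -/
noncomputable def prodSameDVPDA {Q C I R Γ : Type} [Inhabited Γ]
    (M : DVPDA Q C I R Γ) (n : ℕ) :
    DVPDA (ExtState (Fin n → Q)) C I (R ⊕ Unit) (Fin n → Γ) where
  δc := fun s σ => match s with
    | .base qs => (.base (fun j => (M.δc (qs j) σ).1), fun j => (M.δc (qs j) σ).2)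
    | .check => (.fail, fun _ => default)
    | .fin => (.fin, fun _ => default)
    | .fail => (.fail, fun _ => default)
  δi := fun s σ => match s with
    | .base qs => .base (fun j => M.δi (qs j) σ)
    | .check => .fail
    | .fin => .fin
    | .fail => .fail
  δr := fun s ρ g => match s, ρ with
    | .base qs, Sum.inl r => (match g with
        | none => .base (fun j => M.δr (qs j) r none)
        | some gs => .base (fun j => M.δr (qs j) r (some (gs j))))
    | .base qs, Sum.inr _ => (match g with
        | none => if ∀ i j, qs i = qs j then .fin else .fail
        | some gs =>
            if (∀ i j, qs i = qs j) ∧ (∀ i j, gs i = gs j) then .check else .fail)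
    | .check, Sum.inr _ => (match g with
        | none => .fin
        | some gs => if ∀ i j, gs i = gs j then .check else .fail)
    | .check, Sum.inl _ => .fail
    | .fin, _ => .fin
    | .fail, _ => .fail

section Aux

variable {Q C I R Γ : Type} [Inhabited Γ] (M : DVPDA Q C I R Γ) (n : ℕ)

theorem aux_fail (w : List (VLetter C I (R ⊕ Unit))) : ∀ st : List (Fin n → Γ),
    ((prodSameDVPDA M n).run (ExtState.fail, st) w).1 ≠ ExtState.fin := by
  induction w with
  | nil => intro st h; cases h
  | cons a w ih =>
    intro st
    cases a with
    | call c => exact ih _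
    | int c => exact ih _
    | ret c => cases st <;> exact ih _

theorem aux_check (w : List (VLetter C I (R ⊕ Unit))) : ∀ st : List (Fin n → Γ),
    ((prodSameDVPDA M n).run (ExtState.check, st) w).1 = ExtState.fin →
    ∀ gs ∈ st, ∀ i j, gs i = gs j := by
  induction w with
  | nil => intro st h; cases h
  | cons a w ih =>
    intro st h
    cases a with
    | call c => exact absurd h (aux_fail M n w _)
    | int c => exact absurd h (aux_fail M n w _)
    | ret c =>
      cases st with
      | nil => intro gs hgs; cases hgs
      | cons g st =>
        cases c with
        | inl c => exact absurd h (aux_fail M n w _)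
        | inr c =>
          by_cases hg : ∀ i j, g i = g j
          · have h' : ((prodSameDVPDA M n).run (ExtState.check, st) w).1 = ExtState.fin := by
              simpa only [DVPDA.run, DVPDA.step, prodSameDVPDA, List.foldl_cons, if_pos hg] using h
            intro gs hgs
            rcases List.mem_cons.1 hgs with rfl | hm
            · exact hg
            · exact ih _ h' gs hm
          · have h' : ((prodSameDVPDA M n).run (ExtState.fail, st) w).1 = ExtState.fin := by
              simpa only [DVPDA.run, DVPDA.step, prodSameDVPDA, List.foldl_cons, if_neg hg] using h
            exact absurd h' (aux_fail M n w _)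

theorem aux_map (st : List (Fin n → Γ)) (h : ∀ gs ∈ st, ∀ i j, gs i = gs j) (i j : Fin n) :
    st.map (fun g => g i) = st.map (fun g => g j) :=
  List.map_congr_left fun g hg => h g hg i j

theorem aux_base (w : List (VLetter C I (R ⊕ Unit))) : ∀ (qs : Fin n → Q) (st : List (Fin n → Γ)),
    ((prodSameDVPDA M n).run (ExtState.base qs, st) w).1 = ExtState.fin →
    ∃ w' : List (VLetter C I R), ∀ i j, M.run (qs i, st.map (fun g => g i)) w' =
      M.run (qs j, st.map (fun g => g j)) w' := by
  induction w with
  | nil => intro qs st h; cases h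
  | cons a w ih =>
    intro qs st h
    cases a with
    | call c =>
      obtain ⟨w', hw⟩ := ih _ _ h
      exact ⟨.call c :: w', hw⟩
    | int c =>
      obtain ⟨w', hw⟩ := ih _ _ h
      exact ⟨.int c :: w', hw⟩
    | ret c =>
      cases c with
      | inl c =>
        cases st with
        | nil =>
          obtain ⟨w', hw⟩ := ih _ _ h
          exact ⟨.ret c :: w', hw⟩
        | cons g st =>
          obtain ⟨w', hw⟩ := ih _ _ h
          exact ⟨.ret c :: w', hw⟩
      | inr c =>
        refine ⟨[], fun i j => ?_⟩
        cases st with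
        | nil =>
          by_cases hg : ∀ i j, qs i = qs j
          · simp [hg i j]
          · have h' : ((prodSameDVPDA M n).run (ExtState.fail, []) w).1 = ExtState.fin := by
              simpa only [DVPDA.run, DVPDA.step, prodSameDVPDA, List.foldl_cons, if_neg hg] using h
            exact absurd h' (aux_fail M n w _)
        | cons g st =>
          by_cases hg : (∀ i j, qs i = qs j) ∧ ∀ i j, g i = g j
          · have h' : ((prodSameDVPDA M n).run (ExtState.check, st) w).1 = ExtState.fin := by
              simpa only [DVPDA.run, DVPDA.step, prodSameDVPDA, List.foldl_cons, if_pos hg] using h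
            have := aux_check M n w _ h'
            simp only [List.map_cons, hg.1 i j, hg.2 i j, aux_map n st this i j]
          · have h' : ((prodSameDVPDA M n).run (ExtState.fail, st) w).1 = ExtState.fin := by
              simpa only [DVPDA.run, DVPDA.step, prodSameDVPDA, List.foldl_cons, if_neg hg] using h
            exact absurd h' (aux_fail M n w _)

theorem aux_embed (w : List (VLetter C I R)) : ∀ (qs : Fin n → Q) (st : List (Fin n → Γ)),
    ∃ (w' : List (VLetter C I (R ⊕ Unit))) (qs' : Fin n → Q) (st' : List (Fin n → Γ)),
      (prodSameDVPDA M n).run (ExtState.base qs, st) w' = (ExtState.base qs', st') ∧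
      ∀ j, M.run (qs j, st.map (fun g => g j)) w = (qs' j, st'.map (fun g => g j)) := by
  induction w with
  | nil => intro qs st; exact ⟨[], qs, st, rfl, fun _ => rfl⟩
  | cons a w ih =>
    intro qs st
    cases a with
    | call c =>
      obtain ⟨w', qs', st', h1, h2⟩ := ih (fun j => (M.δc (qs j) c).1)
        ((fun j => (M.δc (qs j) c).2) :: st)
      exact ⟨.call c :: w', qs', st', h1, h2⟩
    | int c =>
      obtain ⟨w', qs', st', h1, h2⟩ := ih (fun j => M.δi (qs j) c) st
      exact ⟨.int c :: w', qs', st', h1, h2⟩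
    | ret c =>
      cases st with
      | nil =>
        obtain ⟨w', qs', st', h1, h2⟩ := ih (fun j => M.δr (qs j) c none) []
        exact ⟨.ret (.inl c) :: w', qs', st', h1, h2⟩
      | cons g st =>
        obtain ⟨w', qs', st', h1, h2⟩ := ih (fun j => M.δr (qs j) c (some (g j))) st
        exact ⟨.ret (.inl c) :: w', qs', st', h1, h2⟩

theorem aux_pop (st : List (Fin n → Γ)) (h : ∀ gs ∈ st, ∀ i j, gs i = gs j) :
    ∃ w : List (VLetter C I (R ⊕ Unit)),
      ((prodSameDVPDA M n).run (ExtState.check, st) w).1 = ExtState.fin := by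
  induction st with
  | nil => exact ⟨[.ret (.inr ())], rfl⟩
  | cons g st ih =>
    obtain ⟨w, hw⟩ := ih fun gs hgs => h gs (List.mem_cons_of_mem _ hgs)
    have hg := h g List.mem_cons_self
    refine ⟨.ret (.inr ()) :: w, ?_⟩
    simpa only [DVPDA.run, DVPDA.step, prodSameDVPDA, List.foldl_cons, if_pos hg] using hw

theorem aux_pop_base (qs : Fin n → Q) (hq : ∀ i j, qs i = qs j) (st : List (Fin n → Γ))
    (h : ∀ gs ∈ st, ∀ i j, gs i = gs j) :
    ∃ w : List (VLetter C I (R ⊕ Unit)),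
      ((prodSameDVPDA M n).run (ExtState.base qs, st) w).1 = ExtState.fin := by
  cases st with
  | nil =>
    refine ⟨[.ret (.inr ())], ?_⟩
    simp only [DVPDA.run, DVPDA.step, prodSameDVPDA, List.foldl_cons, List.foldl_nil, if_pos hq]
  | cons g st =>
    obtain ⟨w, hw⟩ := aux_pop M n st fun gs hgs => h gs (List.mem_cons_of_mem _ hgs)
    have hg := And.intro hq (h g List.mem_cons_self)
    refine ⟨.ret (.inr ()) :: w, ?_⟩
    simpa only [DVPDA.run, DVPDA.step, prodSameDVPDA, List.foldl_cons, if_pos hg] using hw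

end Aux

/-- Let `M` be a DVPDA with state set `Q = {p_1, …, p_n}` (given by an
enumeration `e : Fin n ≃ Q`), and let `M^n_same` be the DVPDA obtained from the `n`-fold
product `M^n` by adding `q_check`, `q_fin`, `q_fail` and a new return letter `r`, with
start state `(p_1, …, p_n)` and single final state `q_fin`.  Then the language accepted by
`M^n_same` is nonempty iff `M` has a synchronizing word in the same stack model.  (That
`M^n_same` is a well-defined DVPDA is witnessed by the definition `prodSameDVPDA`.) -/
theorem prodSameDVPDA_language_nonempty_iff_syncSame
    {Q C I R Γ : Type} [Fintype Q] [Nonempty Q] [Inhabited Γ] (M : DVPDA Q C I R Γ)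
    (n : ℕ) (e : Fin n ≃ Q) :
    (∃ w : List (VLetter C I (R ⊕ Unit)),
      ((prodSameDVPDA M n).run (ExtState.base (fun j => e j), []) w).1 =
        ExtState.fin) ↔
    (∃ w : List (VLetter C I R), M.SyncSame w) := by
  constructor
  · rintro ⟨w, hw⟩
    obtain ⟨w', h⟩ := aux_base M n w _ _ hw
    obtain ⟨q0⟩ := ‹Nonempty Q›
    refine ⟨w', (M.run (q0, []) w').1, (M.run (q0, []) w').2, fun q => ?_⟩
    simpa using h (e.symm q) (e.symm q0)
  · rintro ⟨w, qbar, υ, h⟩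
    obtain ⟨w1, qs, st, h1, h2⟩ := aux_embed M n w (fun j => e j) []
    have h3 : ∀ j, qs j = qbar ∧ st.map (fun g => g j) = υ := fun j => by
      have := (h2 j).symm.trans (h (e j))
      exact Prod.mk.inj this
    obtain ⟨w2, hw2⟩ := aux_pop_base M n qs (fun i j => (h3 i).1.trans (h3 j).1.symm) st
      (fun gs hgs i j => List.map_inj_left.1 ((h3 i).2.trans (h3 j).2.symm) gs hgs)
    refine ⟨w1 ++ w2, ?_⟩
    unfold DVPDA.run at h1 hw2 ⊢
    rw [List.foldl_append, h1]
    exact hw2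
end

section
/- Let M be a deterministic visibly push-down automaton with Σ_ret = ∅, and let T_M = (Q, Σ_call ∪ Σ_int, Γ\{⊥}, δ_T) be the sequential transducer with δ_T(q, σ) = (q', γ) whenever δ_c(q, σ) = (q', γ) for σ ∈ Σ_call (the pushed symbol output as a length-one word) and δ_T(q, σ) = (δ_i(q, σ), ε) for σ ∈ Σ_int. Then T_M is a visibly sequential transducer, and a word w synchronizes M in the same stack model if and only if w trace-synchronizes T_M. -/
/-- One step of a sequential transducer with transition function `δ : Q → A → Q × Γ*`:
the new state is composed and the produced output is appended. -/
def tStep {Q A Γ : Type} (δ : Q → A → Q × List Γ) : Q × List Γ → A → Q × List Γ :=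
  fun s a => ((δ s.1 a).1, s.2 ++ (δ s.1 a).2)

/-- The run of a sequential transducer on an input word, from state `q`: the final state
together with the concatenated output word. -/
def tRun {Q A Γ : Type} (δ : Q → A → Q × List Γ) (q : Q) (w : List A) : Q × List Γ :=
  w.foldl (tStep δ) (q, [])

/-- `w` trace-synchronizes the sequential transducer `δ`: from all states the runs on `w`
end in the same state and produce the same output word. -/
def TraceSync {Q A Γ : Type} (δ : Q → A → Q × List Γ) (w : List A) : Prop :=
  ∀ p q : Q, tRun δ p w = tRun δ q w

/-- The sequential transducer `T_M` associated with a DVPDA `M` without return letters: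
a call letter `σ` outputs the pushed stack symbol as a length-one word, and an internal
letter outputs the empty word. -/
def transducerOf {Q C I Γ : Type} (M : DVPDA Q C I Empty Γ) :
    Q → VLetter C I Empty → Q × List Γ
  | q, .call c => ((M.δc q c).1, [(M.δc q c).2])
  | q, .int i  => (M.δi q i, [])
  | _, .ret e  => e.elim

theorem run_eq_rev_tRun {Q C I Γ : Type} (M : DVPDA Q C I Empty Γ)
    (w : List (VLetter C I Empty)) : ∀ (q : Q) (s : List Γ),
    w.foldl M.step (q, s.reverse) =
      ((w.foldl (tStep (transducerOf M)) (q, s)).1,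
       (w.foldl (tStep (transducerOf M)) (q, s)).2.reverse) := by
  induction w with
  | nil => intro q s; rfl
  | cons a w ih =>
    intro q s
    cases a with
    | call c =>
      have h := ih (M.δc q c).1 (s ++ [(M.δc q c).2])
      simpa [DVPDA.step, tStep, transducerOf] using h
    | int i =>
      have h := ih (M.δi q i) s
      simpa [DVPDA.step, tStep, transducerOf] using h
    | ret e => exact e.elim

/-- Let `M` be a DVPDA with `Σ_ret = ∅` and let
`T_M = (Q, Σ_call ∪ Σ_int, Γ∖{⊥}, δ_T)` be the associated sequential transducer.  Then
`T_M` is a visibly sequential transducer (output lengths do not depend on the state), and a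
word `w` synchronizes `M` in the same stack model iff `w` trace-synchronizes `T_M`. -/
theorem dvpda_no_ret_syncSame_iff_traceSync
    {Q C I Γ : Type} [Fintype Q] [Nonempty Q] (M : DVPDA Q C I Empty Γ) :
    (∀ (σ : VLetter C I Empty) (p q : Q),
      ((transducerOf M) p σ).2.length = ((transducerOf M) q σ).2.length) ∧
    (∀ w : List (VLetter C I Empty),
      M.SyncSame w ↔ TraceSync (transducerOf M) w) := by
  refine ⟨?_, ?_⟩
  · intro σ p q
    cases σ with
    | call c => rfl
    | int i => rfl
    | ret e => exact e.elim
  · intro w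
    have key : ∀ q : Q, M.run (q, []) w =
        ((tRun (transducerOf M) q w).1, (tRun (transducerOf M) q w).2.reverse) :=
      fun q => run_eq_rev_tRun M w q []
    constructor
    · rintro ⟨qb, u, h⟩ p q
      have e := (key p).symm.trans ((h p).trans ((h q).symm.trans (key q)))
      rw [Prod.mk.injEq] at e
      exact Prod.ext e.1 (List.reverse_injective e.2)
    · intro h
      obtain ⟨q0⟩ := ‹Nonempty Q›
      refine ⟨(tRun (transducerOf M) q0 w).1, (tRun (transducerOf M) q0 w).2.reverse,
        fun q => ?_⟩
      rw [key q, h q q0]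
end

section
/- Let T = (Q, Σ, Γ, δ) be a visibly sequential transducer, and for σ ∈ Σ let Σ_σ = {γ ∈ Γ* : δ(q, σ) = (q', γ) for some q, q' ∈ Q}. Then each Σ_σ either equals {ε} or contains only words of one common positive length, and the DVPDA M_T constructed from T as described in the context is a well-defined deterministic visibly push-down automaton such that a word w trace-synchronizes T if and only if w synchronizes M_T in the same stack model. -/
/-- The DVPDA `M_T` constructed from a visibly sequential transducer `T = (Q, Σ, Γ, δ)`:
the internal letters are those `σ ∈ Σ` with `Σ_σ = {ε}` (all outputs empty), the call
letters are the remaining ones, there are no return letters, and the stack alphabet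
consists of the nonempty output words, each counting as a single stack symbol.  A call
letter `σ` in state `q` moves to the state of `δ(q, σ)` and pushes its (nonempty) output
word as one stack symbol; an internal letter just moves to the state of `δ(q, σ)`. -/
def vstDVPDA {Q A Γ : Type} (δ : Q → A → Q × List Γ) :
    DVPDA Q {a : A // ¬ ∀ q : Q, (δ q a).2 = []} {a : A // ∀ q : Q, (δ q a).2 = []}
      Empty (List Γ) where
  δc := fun q a => ((δ q a.1).1, (δ q a.1).2)
  δi := fun q a => (δ q a.1).1
  δr := fun _ e _ => e.elim

open Classical in
/-- Rereading a word `w ∈ Σ*` over the visibly partitioned alphabet of `M_T`: each letter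
`σ` becomes an internal letter if `Σ_σ = {ε}` and a call letter otherwise. -/
noncomputable def encodeWord {Q A Γ : Type} (δ : Q → A → Q × List Γ) (w : List A) :
    List (VLetter {a : A // ¬ ∀ q : Q, (δ q a).2 = []}
      {a : A // ∀ q : Q, (δ q a).2 = []} Empty) :=
  w.map (fun a =>
    if h : ∀ q : Q, (δ q a).2 = [] then VLetter.int ⟨a, h⟩ else VLetter.call ⟨a, h⟩)

theorem vst_aux {Q A Γ : Type} (δ : Q → A → Q × List Γ)
    (hvst : ∀ (a : A) (p q : Q), (δ p a).2.length = (δ q a).2.length) (w : List A) :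
    ∀ (p q : Q) (x y : List Γ) (s t : List (List Γ)), x.length = y.length → (x = y ↔ s = t) →
      (w.foldl (tStep δ) (p, x) = w.foldl (tStep δ) (q, y) ↔
        (vstDVPDA δ).run (p, s) (encodeWord δ w) = (vstDVPDA δ).run (q, t) (encodeWord δ w)) := by
  induction w with
  | nil =>
    intro p q x y s t _ h
    simp [encodeWord, DVPDA.run, h]
  | cons a w ih =>
    intro p q x y s t hl h
    by_cases ha : ∀ q : Q, (δ q a).2 = []
    · have := ih (δ p a).1 (δ q a).1 x y s t hl h
      simpa [encodeWord, DVPDA.run, DVPDA.step, vstDVPDA, tStep, ha] using this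
    · have := ih (δ p a).1 (δ q a).1 (x ++ (δ p a).2) (y ++ (δ q a).2)
        ((δ p a).2 :: s) ((δ q a).2 :: t) (by simp [hl, hvst a p q]) (by
          rw [List.cons.injEq, ← h]
          constructor
          · intro e
            exact (List.append_inj e hl).symm
          · rintro ⟨e1, e2⟩
            rw [e1, e2])
      simpa only [encodeWord, DVPDA.run, DVPDA.step, vstDVPDA, tStep, ha, List.map_cons,
        List.foldl_cons, dif_neg, not_false_eq_true] using this

/-- Let `T = (Q, Σ, Γ, δ)` be a visibly sequential transducer and for
`σ ∈ Σ` let `Σ_σ = {γ ∈ Γ* : δ(q, σ) = (q', γ) for some q, q'}`.  Then each `Σ_σ` either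
equals `{ε}` or contains only words of one common positive length, and the DVPDA `M_T`
constructed from `T` satisfies: a word `w` trace-synchronizes `T` iff (the rereading over
the visibly alphabet of) `w` synchronizes `M_T` in the same stack model.  (That `M_T` is a
well-defined DVPDA is witnessed by the definition `vstDVPDA`.) -/
theorem vst_traceSync_iff_vstDVPDA_syncSame
    {Q A Γ : Type} [Fintype Q] [Nonempty Q] (δ : Q → A → Q × List Γ)
    (hvst : ∀ (a : A) (p q : Q), (δ p a).2.length = (δ q a).2.length) :
    (∀ a : A, {γ : List Γ | ∃ q : Q, (δ q a).2 = γ} = {[]} ∨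
      ∃ k : ℕ, 0 < k ∧ ∀ γ ∈ {γ : List Γ | ∃ q : Q, (δ q a).2 = γ}, γ.length = k) ∧
    (∀ w : List A, TraceSync δ w ↔ (vstDVPDA δ).SyncSame (encodeWord δ w)) := by
  refine ⟨fun a => ?_, fun w => ?_⟩
  · obtain ⟨q₀⟩ := ‹Nonempty Q›
    rcases Nat.eq_zero_or_pos (δ q₀ a).2.length with h0 | h0
    · left
      have hq : ∀ q, (δ q a).2 = [] := fun q =>
        List.length_eq_zero_iff.mp ((hvst a q q₀).trans h0)
      ext γ
      simp only [Set.mem_setOf_eq, Set.mem_singleton_iff, hq]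
      exact ⟨fun ⟨_, h⟩ => h.symm, fun h => ⟨q₀, h.symm⟩⟩
    · right
      refine ⟨_, h0, ?_⟩
      rintro γ ⟨q, rfl⟩
      exact hvst a q q₀
  · have key := fun p q => vst_aux δ hvst w p q [] [] [] [] rfl (by simp)
    constructor
    · intro h
      obtain ⟨q₀⟩ := ‹Nonempty Q›
      exact ⟨_, _, fun q => (key q q₀).mp (h q q₀)⟩
    · rintro ⟨qb, υ, h⟩ p q
      exact (key p q).mpr ((h p).trans (h q).symm)
end

section
/- Let A = (Q, Σ, δ) be a DFA, S ⊆ Q, n > 0, and let M be the DVCA constructed from A, S, and n as described in the context. Then the following are equivalent: (i) M has an n-turn synchronizing word in the same stack model; (ii) M has an n-turn synchronizing word in the arbitrary stack model; (iii) there exists a word w ∈ Σ* with δ(Q, w) ⊆ S. -/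
open Classical in
/-- The DVCA `M` constructed from a DFA `A = (Q, Σ, δ)`, a subset `S ⊆ Q`, a number
`n > 0` and an arbitrary fixed state `r ∈ Q`, used in the reduction from
`DFA-Sync-Into-Subset` to `n-Turn-Sync-DVCA-{Same, Arb}`.  Its states are
`Q ∪ {q_sync} ∪ {q_stall_i : 0 ≤ i ≤ n}` (`q_sync = Sum.inr (Sum.inl ())`,
`q_stall_i = Sum.inr (Sum.inr i)`), the internal letters are `Σ`, there is one call letter
`a` and one return letter `b`, and the stack (counter) alphabet is `{1, ⊥}`.  Internal
letters act as `δ` on `Q` and as the identity elsewhere; `b` loops on every state of `Q`;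
`q_sync` is a sink (every letter loops on it, `a` incrementing and `b` decrementing the
counter).  The letter `a` maps `q ∈ S` to `q_stall_0` and loops on `q ∈ Q∖S`, always
pushing `1`; for `i < n`, `a` loops on `q_stall_i` pushing `1`; for even `i < n`,
`b` maps `q_stall_i` on counter symbol `1` to `q_stall_{i+1}` and on `⊥` to `r`; for odd
`i < n`, `b` maps `q_stall_i` on `1` to `r` and on `⊥` to `q_stall_{i+1}`.  For even `n`,
`a` maps `q_stall_n` to `q_sync` (pushing `1`) and `b` maps `q_stall_n` to `r` on both `1`
and `⊥`; for odd `n`, `a` loops on `q_stall_n` (pushing `1`), and `b` maps `q_stall_n` on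
`1` to `r` and on `⊥` to `q_sync`. -/
noncomputable def intoSubsetNTurnDVCA {Q A : Type} (δ : Q → A → Q) (S : Set Q)
    (n : ℕ) (r : Q) :
    DVPDA (Q ⊕ Unit ⊕ Fin (n+1)) Unit A Unit Unit where
  δc := fun s _ => match s with
    | Sum.inl q =>
        (if q ∈ S then Sum.inr (Sum.inr ⟨0, n.succ_pos⟩) else Sum.inl q, ())
    | Sum.inr (Sum.inl _) => (Sum.inr (Sum.inl ()), ())
    | Sum.inr (Sum.inr i) =>
        (if (i : ℕ) < n then Sum.inr (Sum.inr i)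
         else if Even n then Sum.inr (Sum.inl ()) else Sum.inr (Sum.inr i), ())
  δi := fun s σ => match s with
    | Sum.inl q => Sum.inl (δ q σ)
    | Sum.inr t => Sum.inr t
  δr := fun s _ g => match s with
    | Sum.inl q => Sum.inl q
    | Sum.inr (Sum.inl _) => Sum.inr (Sum.inl ())
    | Sum.inr (Sum.inr i) =>
        if h : (i : ℕ) < n then
          (if Even (i : ℕ) then
             (match g with
              | some _ => Sum.inr (Sum.inr ⟨(i : ℕ) + 1, by omega⟩)
              | none => Sum.inl r)
           else
             (match g with
              | some _ => Sum.inl r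
              | none => Sum.inr (Sum.inr ⟨(i : ℕ) + 1, by omega⟩)))
        else
          (if Even n then Sum.inl r
           else
             (match g with
              | some _ => Sum.inl r
              | none => Sum.inr (Sum.inl ())))

namespace NTurnAux

/-- `Alt h d c k`: there are `c` strict steps of `h` before time `k`, of alternating
directions, the last one of direction `d` (`true` = up). -/
inductive Alt (h : ℕ → ℕ) : Bool → ℕ → ℕ → Prop
  | zero (d : Bool) : Alt h d 0 0
  | mono {d : Bool} {c k : ℕ} : Alt h d c k → Alt h d c (k+1)
  | up {c k : ℕ} : Alt h false c k → h k < h (k+1) → Alt h true (c+1) (k+1)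
  | down {c k : ℕ} : Alt h true c k → h (k+1) < h k → Alt h false (c+1) (k+1)

theorem Alt.any {h : ℕ → ℕ} (d : Bool) (k : ℕ) : Alt h d 0 k := by
  induction k with
  | zero => exact .zero d
  | succ k ih => exact .mono ih

theorem Alt.drop {h : ℕ → ℕ} {d : Bool} {c k : ℕ} (H : Alt h d c k) : Alt h d (c-1) k := by
  induction H with
  | zero d => exact .zero d
  | mono _ ih => exact .mono ih
  | @up c k _ hs ih =>
    rcases c with _ | c
    · exact Alt.any _ _
    · exact .up ih hs
  | @down c k _ hs ih =>
    rcases c with _ | c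
    · exact Alt.any _ _
    · exact .down ih hs

theorem Alt.to_one {h : ℕ → ℕ} {c k : ℕ} (H : Alt h false (c+1) k) : Alt h false 1 k := by
  induction c with
  | zero => exact H
  | succ c ih => exact ih H.drop

theorem Alt.flip {h : ℕ → ℕ} {c k : ℕ} (H : Alt h true (c+2) k) : Alt h false 1 k := by
  generalize hd : true = d at H
  generalize hc : c + 2 = e at H
  induction H with
  | zero d => omega
  | mono _ ih => exact .mono (ih hd hc)
  | @up c' k H hs ih =>
    obtain rfl : c' = c + 1 := by omega
    exact .mono H.to_one
  | down _ _ _ => cases hd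

def Dir (h : ℕ → ℕ) (d : Bool) (t : ℕ) : Prop :=
  if d then h t < h (t+1) else h (t+1) < h t

theorem Alt.bound {h : ℕ → ℕ} {br : ℕ → ℕ} {m : ℕ} (h0 : br 0 = 0)
    (hs : ∀ j < m, (∀ a b : ℕ, br j ≤ a → a ≤ b → b ≤ br (j+1) → h a ≤ h b) ∨
      (∀ a b : ℕ, br j ≤ a → a ≤ b → b ≤ br (j+1) → h b ≤ h a))
    {d : Bool} {c k : ℕ} (H : Alt h d c k) :
    ∀ j ≤ m, k ≤ br j → c ≤ j ∧
      (c = j → 0 < j → ∃ t, br (j-1) ≤ t ∧ t + 1 ≤ br j ∧ Dir h d t) := by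
  have key : ∀ {d d' : Bool} {c k : ℕ}, d' = !d →
      (∀ j ≤ m, k ≤ br j → c ≤ j ∧
      (c = j → 0 < j → ∃ t, br (j-1) ≤ t ∧ t + 1 ≤ br j ∧ Dir h d t)) →
      Dir h d' k → 
      (∀ j ≤ m, k+1 ≤ br j → c+1 ≤ j ∧
      (c+1 = j → 0 < j → ∃ t, br (j-1) ≤ t ∧ t + 1 ≤ br j ∧ Dir h d' t)) := by
    intro d d' c k hd ih hk j hj hkj
    rcases j with _ | j
    · omega
    by_cases hlt : k + 1 ≤ br j
    · have := (ih j (by omega) (by omega)).1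
      by_cases hcj : c = j
      · subst hcj
        -- c = j, so k ≤ br j with count j; recurse
        refine ⟨by omega, fun _ _ => ?_⟩
        exfalso
        rcases c with _ | c
        · omega
        · by_cases hlt' : k + 1 ≤ br c
          · have := (ih c (by omega) (by omega)).1
            omega
          · obtain ⟨t, h1, h2, h3⟩ := (ih (c+1) (by omega) (by omega)).2 rfl (by omega)
            simp only [Nat.add_sub_cancel] at h1
            rcases hs c (by omega) with hm | hm
            · have e1 := hm t (t+1) h1 (by omega) h2
              have e2 := hm k (k+1) (by omega) (by omega) hlt
              cases d <;> subst hd <;> simp [Dir] at h3 hk <;> omega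
            · have e1 := hm t (t+1) h1 (by omega) h2
              have e2 := hm k (k+1) (by omega) (by omega) hlt
              cases d <;> subst hd <;> simp [Dir] at h3 hk <;> omega
      · exact ⟨by omega, fun _ _ => by omega⟩
    · obtain ⟨hc, hc'⟩ := ih (j+1) hj (by omega)
      have hne : c ≠ j + 1 := by
        intro hcj
        obtain ⟨t, h1, h2, h3⟩ := hc' hcj (by omega)
        simp only [Nat.add_sub_cancel] at h1
        rcases hs j (by omega) with hm | hm
        · have e1 := hm t (t+1) h1 (by omega) h2
          have e2 := hm k (k+1) (by omega) (by omega) hkj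
          cases d <;> subst hd <;> simp [Dir] at h3 hk <;> omega
        · have e1 := hm t (t+1) h1 (by omega) h2
          have e2 := hm k (k+1) (by omega) (by omega) hkj
          cases d <;> subst hd <;> simp [Dir] at h3 hk <;> omega
      refine ⟨by omega, fun _ _ => ⟨k, ?_, hkj, hk⟩⟩
      simp only [Nat.add_sub_cancel]; omega
  induction H with
  | zero d => exact fun j _ _ => ⟨by omega, fun _ _ => by omega⟩
  | mono _ ih => exact fun j hj hk => ih j hj (by omega)
  | up _ hk ih => exact key (d := false) rfl ih (by simpa [Dir] using hk)
  | down _ hk ih => exact key (d := true) rfl ih (by simpa [Dir] using hk)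

theorem Alt.le_of_strokes {h : ℕ → ℕ} {len m : ℕ} (H : AtMostStrokes h len m)
    {d : Bool} {c : ℕ} (A : Alt h d c len) : c ≤ m := by
  obtain ⟨br, h0, hl, -, hs⟩ := H
  let br' : ℕ → ℕ := fun i => if hi : i < m + 1 then br ⟨i, hi⟩ else 0
  refine (Alt.bound (br := br') (m := m) ?_ ?_ A m le_rfl ?_).1
  · simpa [br'] using h0
  · intro j hj
    have := hs ⟨j, hj⟩
    have e1 : br' j = br (Fin.castSucc ⟨j, hj⟩) := by
      simp only [br']; rw [dif_pos (by omega)]; rfl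
    have e2 : br' (j+1) = br (Fin.succ ⟨j, hj⟩) := by
      simp only [br']; rw [dif_pos (by omega)]; rfl
    rw [e1, e2]; exact this
  · have : br' m = br (Fin.last m) := by
      simp only [br']; rw [dif_pos (by omega)]; rfl
    rw [this, hl]

def AMS (h : ℕ → ℕ) (len m : ℕ) : Prop :=
  ∃ br : ℕ → ℕ, br 0 = 0 ∧ br m = len ∧ Monotone br ∧
    ∀ j < m,
      (∀ a b : ℕ, br j ≤ a → a ≤ b → b ≤ br (j+1) → h a ≤ h b) ∨
      (∀ a b : ℕ, br j ≤ a → a ≤ b → b ≤ br (j+1) → h b ≤ h a)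

theorem AMS.to {h : ℕ → ℕ} {len m : ℕ} (H : AMS h len m) : AtMostStrokes h len m := by
  obtain ⟨br, h0, hl, hm, hs⟩ := H
  exact ⟨fun i => br i, h0, hl, fun i j hij => hm hij, fun j => hs j j.2⟩

theorem AMS.snoc {h h' : ℕ → ℕ} {len len' m : ℕ} (H : AMS h len m) (hll : len ≤ len')
    (he : ∀ k ≤ len, h' k = h k)
    (hs : (∀ a b : ℕ, len ≤ a → a ≤ b → b ≤ len' → h' a ≤ h' b) ∨
      (∀ a b : ℕ, len ≤ a → a ≤ b → b ≤ len' → h' b ≤ h' a)) : AMS h' len' (m+1) := by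
  obtain ⟨br, h0, hl, hm, hs'⟩ := H
  refine ⟨fun i => if i ≤ m then br i else len', by simpa using h0, by simp, ?_, ?_⟩
  · intro i j hij
    dsimp only
    have := hm hij
    split_ifs with h1 h2 h2
    · exact this
    · have := hm h1; omega
    · omega
    · exact le_rfl
  · intro j hj
    dsimp only
    rw [if_pos (by omega)]
    by_cases hjm : j + 1 ≤ m
    · rw [if_pos hjm]
      have hb := hm hjm
      rcases hs' j (by omega) with h1 | h1
      · left; intro a b x y z
        rw [he a (by omega), he b (by omega)]; exact h1 a b x y z
      · right; intro a b x y z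
        rw [he a (by omega), he b (by omega)]; exact h1 a b x y z
    · obtain rfl : j = m := by omega
      rw [if_neg hjm, hl]; exact hs

section height
variable {Q C I R Γ : Type}

def hstep : ℕ → VLetter C I R → ℕ
  | h, .call _ => h + 1
  | h, .int _ => h
  | h, .ret _ => h - 1

theorem step_len (M : DVPDA Q C I R Γ) (cfg : Q × List Γ) (x : VLetter C I R) :
    (M.step cfg x).2.length = hstep cfg.2.length x := by
  obtain ⟨q, s⟩ := cfg
  cases x <;> cases s <;> simp [DVPDA.step, hstep]

theorem run_len (M : DVPDA Q C I R Γ) (w : List (VLetter C I R)) (cfg : Q × List Γ) :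
    (M.run cfg w).2.length = w.foldl hstep cfg.2.length := by
  induction w generalizing cfg with
  | nil => rfl
  | cons x w ih =>
    have := ih (M.step cfg x)
    rw [step_len] at this
    exact this

theorem run_append (M : DVPDA Q C I R Γ) (w w' : List (VLetter C I R)) (cfg : Q × List Γ) :
    M.run cfg (w ++ w') = M.run (M.run cfg w) w' := by
  simp [DVPDA.run, List.foldl_append]

end height

/-- internal letters read before the first call letter -/
def pre {A : Type} : List (VLetter Unit A Unit) → List A
  | [] => []
  | .call _ :: _ => []
  | .int i :: t => i :: pre t
  | .ret _ :: t => pre t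

section main
variable {Q A : Type} (δ : Q → A → Q) (S : Set Q) (n : ℕ) (r : Q)

def Inv (w : List (VLetter Unit A Unit)) (h : ℕ → ℕ) (q : Q) (k : ℕ) :
    (Q ⊕ Unit ⊕ Fin (n+1)) → Prop
  | Sum.inl p => ((w.drop k |> pre).foldl δ p = (pre w).foldl δ q ∧ h k = 0) ∨
      1 ≤ h k ∨ Alt h false 1 k
  | Sum.inr (Sum.inl _) => ∃ d, Alt h d (n+2) k
  | Sum.inr (Sum.inr i) =>
      (Even i.1 ∧ ((h k = 0 ∧ Alt h false (i.1+1) k) ∨ Alt h true (i.1+2) k)) ∨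
      (¬ Even i.1 ∧ Alt h false (i.1+2) k) ∨
      (i.1 = 0 ∧ 2 ≤ h k) ∨ (i.1 = 1 ∧ 1 ≤ h k ∧ Alt h false 1 k)

theorem Inv.one {w : List (VLetter Unit A Unit)} {h : ℕ → ℕ} {q : Q} {k : ℕ}
    {i : Fin (n+1)} (H : Inv δ n w h q k (Sum.inr (Sum.inr i))) :
    Alt h false 1 k ∨ (i.1 = 0 ∧ 2 ≤ h k) := by
  rcases H with ⟨-, ⟨-, H⟩ | H⟩ | ⟨-, H⟩ | H | ⟨-, -, H⟩
  · exact .inl H.to_one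
  · exact .inl H.flip
  · exact .inl H.to_one
  · exact .inr H
  · exact .inl H

theorem inv_step (hn : 0 < n) (w : List (VLetter Unit A Unit)) (h : ℕ → ℕ) (q : Q) (k : ℕ)
    (hG : (pre w).foldl δ q ∉ S) (x : VLetter Unit A Unit) (t : List (VLetter Unit A Unit))
    (hx : w.drop k = x :: t) (s : Q ⊕ Unit ⊕ Fin (n+1)) (υ : List Unit)
    (hυ : h k = υ.length) (hυ' : h (k+1) = hstep υ.length x)
    (H : Inv δ n w h q k s) :
    Inv δ n w h q (k+1) ((intoSubsetNTurnDVCA δ S n r).step (s, υ) x).1 := by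
  have hdrop : w.drop (k+1) = t := by
    rw [← List.tail_drop, hx]; rfl
  rcases s with p | ⟨⟩ | i
  · -- Q states
    simp only [Inv, hx] at H
    rcases x with c | a | b
    · simp only [hstep] at hυ'
      simp only [DVPDA.step, intoSubsetNTurnDVCA]
      split_ifs with hp
      · rcases H with ⟨H, -⟩ | H | H
        · exfalso
          simp only [pre, List.foldl_nil] at H
          exact hG (H ▸ hp)
        · right; right; left; exact ⟨rfl, by omega⟩
        · left; exact ⟨⟨0, rfl⟩, .inr (.up H (by omega))⟩
      · right; left; omega
    · simp only [hstep] at hυ'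
      simp only [DVPDA.step, intoSubsetNTurnDVCA, Inv, hdrop]
      rcases H with ⟨H, H'⟩ | H | H
      · left; exact ⟨H, by omega⟩
      · right; left; omega
      · right; right; exact .mono H
    · simp only [hstep] at hυ'
      have : ((intoSubsetNTurnDVCA δ S n r).step (Sum.inl p, υ) (.ret b)).1 = Sum.inl p := by
        cases υ <;> simp [DVPDA.step, intoSubsetNTurnDVCA]
      rw [this]
      simp only [Inv, hdrop]
      rcases H with ⟨H, H'⟩ | H | H
      · left; exact ⟨H, by omega⟩
      · right; right; exact .down (Alt.any _ _) (by omega)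
      · right; right; exact .mono H
  · have : ((intoSubsetNTurnDVCA δ S n r).step (Sum.inr (Sum.inl ()), υ) x).1
        = Sum.inr (Sum.inl ()) := by
      cases x <;> cases υ <;> simp [DVPDA.step, intoSubsetNTurnDVCA]
    rw [this]
    obtain ⟨d, H⟩ := H
    exact ⟨d, .mono H⟩
  · rcases x with c | a | b
    · simp only [hstep] at hυ'
      have H2 : Inv δ n w h q (k+1) (Sum.inr (Sum.inr i)) := by
        rcases H with ⟨e, ⟨-, H⟩ | H⟩ | ⟨e, H⟩ | ⟨e, H⟩ | ⟨e, e', H⟩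
        · exact .inl ⟨e, .inr (.up H (by omega))⟩
        · exact .inl ⟨e, .inr (.mono H)⟩
        · exact .inr (.inl ⟨e, .mono H⟩)
        · exact .inr (.inr (.inl ⟨e, by omega⟩))
        · exact .inr (.inr (.inr ⟨e, by omega, .mono H⟩))
      simp only [DVPDA.step, intoSubsetNTurnDVCA]
      split_ifs with h1 h2
      · exact H2
      · have hi : i.1 = n := by omega
        rcases H2 with ⟨e, ⟨e', H⟩ | H⟩ | ⟨e, H⟩ | ⟨e, H⟩ | ⟨e, e', H⟩
        · omega
        · exact ⟨true, hi ▸ H⟩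
        · rw [hi] at e; exact absurd h2 e
        · omega
        · rw [← hi, e] at h2; exact absurd h2 (by decide)
      · exact H2
    · simp only [hstep] at hυ'
      simp only [DVPDA.step, intoSubsetNTurnDVCA]
      rcases H with ⟨e, ⟨e', H⟩ | H⟩ | ⟨e, H⟩ | ⟨e, H⟩ | ⟨e, e', H⟩
      · exact .inl ⟨e, .inl ⟨by omega, .mono H⟩⟩
      · exact .inl ⟨e, .inr (.mono H)⟩
      · exact .inr (.inl ⟨e, .mono H⟩)
      · exact .inr (.inr (.inl ⟨e, by omega⟩))
      · exact .inr (.inr (.inr ⟨e, by omega, .mono H⟩))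
    · simp only [hstep] at hυ'
      have hr : Alt h false 1 (k+1) → Inv δ n w h q (k+1) (Sum.inl r) :=
        fun H => .inr (.inr H)
      have h1 := Inv.one δ n H
      rcases υ with _ | ⟨g, υ⟩
      · -- bottom
        simp only [List.length_nil] at hυ hυ'
        have h1' : Alt h false 1 (k+1) := by
          rcases h1 with h1 | h1
          · exact .mono h1
          · omega
        simp only [DVPDA.step, intoSubsetNTurnDVCA]
        split_ifs with hlt hev hev
        · exact hr h1'
        · rcases H with ⟨e, -⟩ | ⟨e, H⟩ | ⟨e, H⟩ | ⟨e, e', H⟩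
          · exact absurd e hev
          · exact .inl ⟨by simpa [Nat.even_add_one] using hev, .inl ⟨by omega, .mono H⟩⟩
          · omega
          · omega
        · exact hr h1'
        · have hi : i.1 = n := by omega
          rcases H with ⟨e, -⟩ | ⟨e, H⟩ | ⟨e, H⟩ | ⟨e, e', H⟩
          · rw [hi] at e; exact absurd e hev
          · exact ⟨false, .mono (hi ▸ H)⟩
          · omega
          · omega
      · simp only [List.length_cons] at hυ hυ'
        have h1' : Alt h false 1 (k+1) := .down (Alt.any _ _) (by omega)
        simp only [DVPDA.step, intoSubsetNTurnDVCA]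
        split_ifs with hlt hev hev
        · have hev' : ¬ Even (i.1 + 1) := by simpa [Nat.even_add_one] using hev
          rcases H with ⟨e, ⟨e', H⟩ | H⟩ | ⟨e, H⟩ | ⟨e, H⟩ | ⟨e, e', H⟩
          · omega
          · exact .inr (.inl ⟨hev', .down H (by omega)⟩)
          · exact absurd hev e
          · exact .inr (.inr (.inr ⟨by simp [e], by omega, h1'⟩))
          · rw [e] at hev; exact absurd hev (by decide)
        · exact hr h1'
        · exact hr h1'
        · exact hr h1'

theorem inv_all (hn : 0 < n) (w : List (VLetter Unit A Unit)) (q : Q)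
    (hG : (pre w).foldl δ q ∉ S) (k : ℕ) (hk : k ≤ w.length) :
    Inv δ n w (fun k => (((intoSubsetNTurnDVCA δ S n r).run (Sum.inl q, []) (w.take k)).2).length)
      q k ((intoSubsetNTurnDVCA δ S n r).run (Sum.inl q, []) (w.take k)).1 := by
  induction k with
  | zero => left; simp [DVPDA.run]
  | succ k ih =>
    have ht : (intoSubsetNTurnDVCA δ S n r).run (Sum.inl q, []) (w.take (k+1)) =
        (intoSubsetNTurnDVCA δ S n r).step
          ((intoSubsetNTurnDVCA δ S n r).run (Sum.inl q, []) (w.take k)) w[k] := by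
      rw [List.take_succ_eq_append_getElem (by omega), run_append]; rfl
    have := inv_step δ S n r hn w _ q k hG w[k] (w.drop (k+1)) (List.drop_eq_getElem_cons (by omega))
      _ ((intoSubsetNTurnDVCA δ S n r).run (Sum.inl q, []) (w.take k)).2 rfl
      (by rw [← step_len, ← ht]) (ih (by omega))
    rw [← ht] at this
    exact this

theorem sync_sink (w : List (VLetter Unit A Unit)) (υ : List Unit) :
    ((intoSubsetNTurnDVCA δ S n r).run (Sum.inr (Sum.inl ()), υ) w).1 = Sum.inr (Sum.inl ()) := by
  induction w generalizing υ with
  | nil => rfl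
  | cons x w ih =>
    have : (intoSubsetNTurnDVCA δ S n r).step (Sum.inr (Sum.inl ()), υ) x
        = (Sum.inr (Sum.inl ()),
          ((intoSubsetNTurnDVCA δ S n r).step (Sum.inr (Sum.inl ()), υ) x).2) := by
      cases x <;> cases υ <;> simp [DVPDA.step, intoSubsetNTurnDVCA]
    simp only [DVPDA.run, List.foldl_cons] at ih ⊢
    rw [this]; exact ih _

theorem back (hn : 0 < n) (w : List (VLetter Unit A Unit))
    (hs : (intoSubsetNTurnDVCA δ S n r).SyncArb w)
    (ht : (intoSubsetNTurnDVCA δ S n r).NTurnRun n w) (q : Q) : (pre w).foldl δ q ∈ S := by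
  by_contra hG
  obtain ⟨qb, hq⟩ := hs
  have h1 := hq (Sum.inr (Sum.inl ()))
  rw [sync_sink] at h1
  have h2 := inv_all δ S n r hn w q hG w.length le_rfl
  have h3 : ((intoSubsetNTurnDVCA δ S n r).run (Sum.inl q, []) (w.take w.length)).1
      = Sum.inr (Sum.inl ()) := by rw [List.take_length, hq, h1]
  rw [h3] at h2
  obtain ⟨d, h2⟩ := h2
  have := Alt.le_of_strokes (ht (Sum.inl q)) h2
  omega

/-! forward direction -/

def W (u : List A) : ℕ → List (VLetter Unit A Unit)
  | 0 => (.ret () :: .ret () :: u.map .int) ++ [.call ()]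
  | i+1 => W u i ++ if Even (i+1) then [.call ()] else [.ret (), .ret ()]

def HH (w : List (VLetter Unit A Unit)) (k : ℕ) : ℕ := (w.take k).foldl hstep 0

theorem HH_append (w w' : List (VLetter Unit A Unit)) (k : ℕ) (hk : k ≤ w.length) :
    HH (w ++ w') k = HH w k := by
  simp [HH, List.take_append_of_le_length hk]

theorem foldl_zero (l : List (VLetter Unit A Unit)) (hl : ∀ x ∈ l, ∀ c, x ≠ .call c) :
    l.foldl hstep 0 = 0 := by
  induction l with
  | nil => rfl
  | cons x l ih =>
    have := ih (fun y hy => hl y (by simp [hy]))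
    rcases x with c | a | b
    · exact absurd rfl (hl _ (by simp) c)
    · exact this
    · exact this

theorem W_strokes (u : List A) (i : ℕ) : AMS (HH (W u i)) (W u i).length (i+1) := by
  induction i with
  | zero =>
    have h0 : AMS (HH (W u 0)) 0 0 :=
      ⟨fun _ => 0, rfl, rfl, fun _ _ _ => le_rfl, fun j hj => by omega⟩
    refine h0.snoc (by omega) (fun _ _ => rfl) (.inl ?_)
    intro a b _ hab hb
    have hz : ∀ k, k < (W u 0).length → HH (W u 0) k = 0 := by
      intro k hk
      simp only [W, List.length_append, List.length_singleton] at hk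
      rw [W, HH_append _ _ _ (by omega)]
      apply foldl_zero
      intro x hx c hc
      have := List.mem_of_mem_take hx
      subst hc
      simp at this
    rcases hab.eq_or_lt with rfl | hlt
    · exact le_rfl
    · rw [hz a (by omega)]; omega
  | succ i ih =>
    refine ih.snoc (by simp [W]) (fun k hk => by rw [W, HH_append _ _ _ hk]) ?_
    have hadd : ∀ w', ∀ j, HH (W u i ++ w') ((W u i).length + j) =
        (w'.take j).foldl hstep ((W u i).foldl hstep 0) := by
      intro w' j
      simp [HH, List.take_append, List.foldl_append, List.take_of_length_le]
    by_cases he : Even (i+1)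
    · left
      intro a b ha hab hb
      rw [W, if_pos he] at hb ⊢
      obtain ⟨a, rfl⟩ := Nat.exists_eq_add_of_le ha
      obtain ⟨b, rfl⟩ := Nat.exists_eq_add_of_le (ha.trans hab)
      rw [hadd, hadd]
      simp only [List.length_append, List.length_singleton] at hb
      have : b ≤ 1 := by omega
      have : a ≤ b := by omega
      interval_cases b <;> interval_cases a <;> simp [hstep]
    · right
      intro a b ha hab hb
      rw [W, if_neg he] at hb ⊢
      obtain ⟨a, rfl⟩ := Nat.exists_eq_add_of_le ha
      obtain ⟨b, rfl⟩ := Nat.exists_eq_add_of_le (ha.trans hab)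
      rw [hadd, hadd]
      simp only [List.length_append, List.length_cons, List.length_nil] at hb
      have : b ≤ 2 := by omega
      have : a ≤ b := by omega
      interval_cases b <;> interval_cases a <;> simp [hstep] <;> omega

theorem W_turn (u : List A) : (intoSubsetNTurnDVCA δ S n r).NTurnRun n (W u n) := by
  intro q
  have := (W_strokes u n).to
  simp only [run_len]
  exact this

theorem run_ints (u : List A) (p : Q) (υ : List Unit) :
    (intoSubsetNTurnDVCA δ S n r).run (Sum.inl p, υ) (u.map .int) =
      (Sum.inl (u.foldl δ p), υ) := by
  induction u generalizing p with
  | nil => rfl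
  | cons a u ih => exact ih (δ p a)

theorem run_ints_sync (u : List A) (υ : List Unit) :
    (intoSubsetNTurnDVCA δ S n r).run (Sum.inr (Sum.inl ()), υ) (u.map .int) =
      (Sum.inr (Sum.inl ()), υ) := by
  induction u with
  | nil => rfl
  | cons a u ih => exact ih

def Good (i : ℕ) (c : (Q ⊕ Unit ⊕ Fin (n+1)) × List Unit) : Prop :=
  c.2 = (if Even i then [()] else []) ∧
  (c.1 = Sum.inr (Sum.inl ()) ∨
    ∃ j : Fin (n+1), c.1 = Sum.inr (Sum.inr j) ∧ j.1 = if Even i then i else i + 1)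

theorem bb (s : Q ⊕ Unit ⊕ Fin (n+1)) :
    (∃ p, (intoSubsetNTurnDVCA δ S n r).run (s, []) [.ret (), .ret ()] = (Sum.inl p, [])) ∨
    (intoSubsetNTurnDVCA δ S n r).run (s, []) [.ret (), .ret ()] = (Sum.inr (Sum.inl ()), []) := by
  rcases s with p | ⟨⟩ | i
  · left; exact ⟨p, rfl⟩
  · right; rfl
  · simp only [DVPDA.run, List.foldl_cons, List.foldl_nil, DVPDA.step]
    by_cases h1 : i.1 < n <;> by_cases h2 : Even i.1
    · left; simp [intoSubsetNTurnDVCA, h1, h2]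
    · left
      by_cases h3 : i.1 + 1 < n
      · simp [intoSubsetNTurnDVCA, h1, h2, h3, Nat.even_add_one]
      · have : n = i.1 + 1 := by omega
        have h4 : Even n := by rw [this]; simpa [Nat.even_add_one] using h2
        simp [intoSubsetNTurnDVCA, h1, h2, h3, h4]
    · have : i.1 = n := by omega
      rw [this] at h2
      left; simp [intoSubsetNTurnDVCA, h1, h2]
    · have : i.1 = n := by omega
      rw [this] at h2
      right; simp [intoSubsetNTurnDVCA, h1, h2]

theorem good_all (hn : 0 < n) (u : List A) (hu : ∀ q : Q, u.foldl δ q ∈ S)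
    (s : Q ⊕ Unit ⊕ Fin (n+1)) (i : ℕ) (hi : i < n) :
    Good n i ((intoSubsetNTurnDVCA δ S n r).run (s, []) (W u i)) := by
  induction i with
  | zero =>
    have : W u 0 = [.ret (), .ret ()] ++ u.map .int ++ [.call ()] := rfl
    rw [this, run_append, run_append]
    rcases bb δ S n r s with ⟨p, hp⟩ | hp
    · rw [hp, run_ints]
      refine ⟨rfl, .inr ⟨⟨0, by omega⟩, ?_, rfl⟩⟩
      simp [DVPDA.run, DVPDA.step, intoSubsetNTurnDVCA, hu p]
    · rw [hp, run_ints_sync]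
      exact ⟨rfl, .inl rfl⟩
  | succ i ih =>
    have ih := ih (by omega)
    rw [W, run_append]
    generalize (intoSubsetNTurnDVCA δ S n r).run (s, []) (W u i) = c at ih
    obtain ⟨t, υ⟩ := c
    obtain ⟨h1, h2⟩ := ih
    dsimp only at h1 h2
    by_cases he : Even i
    · have he' : ¬ Even (i+1) := by simpa [Nat.even_add_one] using he
      rw [if_pos he] at h1
      simp only [if_pos he] at h2
      rw [if_neg he']
      subst h1
      refine ⟨by rw [if_neg he']; rfl, ?_⟩
      rcases h2 with rfl | ⟨j, rfl, hj⟩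
      · left; rfl
      · right
        refine ⟨⟨i+2, by omega⟩, ?_, by rw [if_neg he']⟩
        simp [DVPDA.run, DVPDA.step, intoSubsetNTurnDVCA, hj, he, he', hi, show i < n by omega]
    · have he' : Even (i+1) := by simpa [Nat.even_add_one] using he
      rw [if_neg he] at h1
      simp only [if_neg he] at h2
      rw [if_pos he']
      subst h1
      refine ⟨by rw [if_pos he']; rfl, ?_⟩
      rcases h2 with rfl | ⟨j, rfl, hj⟩
      · left; rfl
      · right
        refine ⟨j, ?_, by rw [if_pos he', hj]⟩
        simp [DVPDA.run, DVPDA.step, intoSubsetNTurnDVCA, hj, hi]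

theorem W_sync (hn : 0 < n) (u : List A) (hu : ∀ q : Q, u.foldl δ q ∈ S)
    (s : Q ⊕ Unit ⊕ Fin (n+1)) :
    ((intoSubsetNTurnDVCA δ S n r).run (s, []) (W u n)).1 = Sum.inr (Sum.inl ()) := by
  obtain ⟨i, rfl⟩ : ∃ i, n = i + 1 := ⟨n - 1, by omega⟩
  have ih := good_all δ S (i+1) r hn u hu s i (by omega)
  rw [W, run_append]
  generalize (intoSubsetNTurnDVCA δ S (i+1) r).run (s, []) (W u i) = c at ih
  obtain ⟨t, υ⟩ := c
  obtain ⟨h1, h2⟩ := ih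
  dsimp only at h1 h2
  rcases h2 with rfl | ⟨j, rfl, hj⟩
  · exact sync_sink _ _ _ _ _ _
  by_cases he : Even i
  · have he' : ¬ Even (i+1) := by simpa [Nat.even_add_one] using he
    rw [if_pos he] at h1 hj
    rw [if_neg he']
    subst h1
    simp [DVPDA.run, DVPDA.step, intoSubsetNTurnDVCA, hj, he, he']
  · have he' : Even (i+1) := by simpa [Nat.even_add_one] using he
    rw [if_neg he] at h1 hj
    rw [if_pos he']
    simp [DVPDA.run, DVPDA.step, intoSubsetNTurnDVCA, hj, he']

theorem same_of_arb (w : List (VLetter Unit A Unit))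
    (h : (intoSubsetNTurnDVCA δ S n r).SyncArb w) :
    (intoSubsetNTurnDVCA δ S n r).SyncSame w := by
  obtain ⟨qb, h⟩ := h
  refine ⟨qb, List.replicate (w.foldl hstep 0) (), fun q => Prod.ext (h q) ?_⟩
  have := run_len (intoSubsetNTurnDVCA δ S n r) w (q, [])
  simp only [List.length_nil] at this
  rw [← this]
  exact List.eq_replicate_of_mem (fun _ _ => rfl)

end main

end NTurnAux

/-- Let `A = (Q, Σ, δ)` be a DFA, `S ⊆ Q`, `n > 0`, and let `M` be the
DVCA constructed from `A`, `S`, `n` (and an arbitrary fixed state `r ∈ Q`).  Then the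
following are equivalent: (i) `M` has an `n`-turn synchronizing word in the same stack
model; (ii) `M` has an `n`-turn synchronizing word in the arbitrary stack model; (iii)
there is a word `w ∈ Σ*` with `δ(Q, w) ⊆ S`. -/
theorem intoSubsetNTurnDVCA_sync_iff
    {Q A : Type} [Fintype Q] (δ : Q → A → Q) (S : Set Q)
    (n : ℕ) (hn : 0 < n) (r : Q) :
    ((∃ w : List (VLetter Unit A Unit),
        (intoSubsetNTurnDVCA δ S n r).SyncSame w ∧
        (intoSubsetNTurnDVCA δ S n r).NTurnRun n w) ↔
      (∃ w : List (VLetter Unit A Unit),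
        (intoSubsetNTurnDVCA δ S n r).SyncArb w ∧
        (intoSubsetNTurnDVCA δ S n r).NTurnRun n w)) ∧
    ((∃ w : List (VLetter Unit A Unit),
        (intoSubsetNTurnDVCA δ S n r).SyncArb w ∧
        (intoSubsetNTurnDVCA δ S n r).NTurnRun n w) ↔
      (∃ w : List A, ∀ q : Q, w.foldl δ q ∈ S)) := by
  refine ⟨⟨?_, ?_⟩, ⟨?_, ?_⟩⟩
  · rintro ⟨w, ⟨qb, υ, h⟩, ht⟩
    exact ⟨w, ⟨qb, fun q => by rw [h q]⟩, ht⟩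
  · rintro ⟨w, h, ht⟩
    exact ⟨w, NTurnAux.same_of_arb δ S n r w h, ht⟩
  · rintro ⟨w, h, ht⟩
    exact ⟨NTurnAux.pre w, NTurnAux.back δ S n r hn w h ht⟩
  · rintro ⟨u, hu⟩
    exact ⟨NTurnAux.W u n, ⟨_, NTurnAux.W_sync δ S n r hn u hu⟩, NTurnAux.W_turn δ S n r u⟩
end
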